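/- arXiv:q-alg/9605021 — 3 statements merged into one kernel-verified Lean document; each statement's English description precedes it below -/
import Mathlib

section
/- For each 0 ≤ j ≤ n there exists a highest weight vector v_j ∈ Ω for the nonstandard action, namely an element v_j ∈ Ω such that: (i) v_j − [t_j] lies in the ℚ-linear span of the antisymmetrized monomials [a_1 … a_p] with p < n + j, where t_j is the tuple (1, 2, …, j, j+1, j+1+n, j+2, j+2+n, …, n, 2n) of length n + j; (ii) for every 1 ≤ α ≤ n − 1, σ_{α,\overline{α+1}} v_j = v_j σ_{α,\overline{α+1}}, where σ_{α,\overline{α+1}} := σ_α σ_{α+1+n} + σ_{α+1+n} σ_α; and (iii) σ_n v_j + (−1)^{n+j} v_j σ_n = 0. -/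
open scoped BigOperators TensorProduct
open Nat

noncomputable section

/-- The symplectic metric `g` of `osp(1|2n)` (0-indexed). -/
def gmat (n : ℕ) (a b : Fin (2*n)) : ℚ :=
  if (a:ℕ) < n ∧ (b:ℕ) = (a:ℕ) + n then -1
  else if (b:ℕ) < n ∧ (a:ℕ) = (b:ℕ) + n then 1
  else 0

/-- The defining relations of `U(osp(1|2n))`:
`(σₐσ_b + σ_bσₐ)σ_c - σ_c(σₐσ_b + σ_bσₐ) = -g_{ac} σ_b - g_{bc} σₐ`. -/
inductive OspRel (n : ℕ) : FreeAlgebra ℚ (Fin (2*n)) → FreeAlgebra ℚ (Fin (2*n)) → Prop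
  | rel (a b c : Fin (2*n)) : OspRel n
      ((FreeAlgebra.ι ℚ a * FreeAlgebra.ι ℚ b + FreeAlgebra.ι ℚ b * FreeAlgebra.ι ℚ a)
          * FreeAlgebra.ι ℚ c)
      (FreeAlgebra.ι ℚ c *
          (FreeAlgebra.ι ℚ a * FreeAlgebra.ι ℚ b + FreeAlgebra.ι ℚ b * FreeAlgebra.ι ℚ a)
        - algebraMap ℚ (FreeAlgebra ℚ (Fin (2*n))) (gmat n a c) * FreeAlgebra.ι ℚ b
        - algebraMap ℚ (FreeAlgebra ℚ (Fin (2*n))) (gmat n b c) * FreeAlgebra.ι ℚ a)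

/-- The universal enveloping superalgebra `U(osp(1|2n))`. -/
abbrev U (n : ℕ) := RingQuot (OspRel n)

/-- The fermionic generators `σₐ`. -/
def σ (n : ℕ) (a : Fin (2*n)) : U n :=
  RingQuot.mkAlgHom ℚ (OspRel n) (FreeAlgebra.ι ℚ a)

/-- The bosonic generators `σ_{ab} = σₐσ_b + σ_bσₐ`. -/
def σσ (n : ℕ) (a b : Fin (2*n)) : U n := σ n a * σ n b + σ n b * σ n a

/-- The antisymmetrized monomial `[a₁ … a_p]`. -/
def brkt (n : ℕ) (p : ℕ) (a : Fin p → Fin (2*n)) : U n :=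
  ∑ s : Equiv.Perm (Fin p),
    (Equiv.Perm.sign s : ℤ) • (List.ofFn fun i => σ n (a (s i))).prod

/-- `Ω`, the span of all the antisymmetrized monomials. -/
def Omega (n : ℕ) : Submodule ℚ (U n) :=
  Submodule.span ℚ {x | ∃ p, ∃ a : Fin p → Fin (2*n), x = brkt n p a}


/-- The span of the antisymmetrized monomials `[a₁ … a_p]` with `p < N`. -/
def lowBrkt (n : ℕ) (N : ℕ) : Submodule ℚ (U n) :=
  Submodule.span ℚ {x | ∃ p, p < N ∧ ∃ a : Fin p → Fin (2*n), x = brkt n p a}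

/-- The tuple `t_j = (1, 2, …, j, j+1, j+1+n, j+2, j+2+n, …, n, 2n)` (0-indexed), of length
`j + 2(n−j)`. -/
def hwTuple (n j : ℕ) (hj : j ≤ n) : Fin (j + 2*(n-j)) → Fin (2*n) := fun i =>
  if _h : (i:ℕ) < j then ⟨(i:ℕ), by have := i.isLt; omega⟩
  else if _h2 : ((i:ℕ) - j) % 2 = 0 then
    ⟨j + ((i:ℕ) - j)/2, by have := i.isLt; omega⟩
  else ⟨j + ((i:ℕ) - j)/2 + n, by have := i.isLt; omega⟩

/-!
In `Λ ⊗ U` let `X = ∑ₐ eₐ ⊗ σₐ`: the coefficients of `Xᵖ` are the antisymmetrized monomials of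
length `p`. Fix an index `k`, let `τ = 1 ⊗ σ_k`, let `D` be the contraction with the `k`-th
coordinate form, so that `D X = τ`, and let `G` be the central bivector attached to `g`. The
relations of `osp(1|2n)` give `τ X² + 2 X τ X + X² τ = G τ + θ X` with `θ = -D G / 2`
anticommuting with `X`. In terms of the commuting operators `x = (· * X)` and `y = -(X * ·)` this
reads `(x - y)² τ = G τ + x θ` with `x θ = y θ`; up to the `θ`-term, `x` and `y` differ by `√G`.
Therefore the polynomial `E_p = ∏_{i < p} (2 X + (p - 1 - 2 i) √G)` in `X` and `G` satisfies
`2 D (X E_p) = (p + 1) (τ E_p + (-1)ᵖ E_p τ)`.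

The coefficient of `e_t` vanishes on the image of `D` when `k` occurs in `t`, so the coefficient
`v` of `e_t` in `2⁻ᵖ E_p` satisfies `σ_k v + (-1)ᵖ v σ_k = 0`, and its leading term is `[t]` since
`E_p = 2ᵖ Xᵖ + O(G)`. Finally, an even generator acts on polynomials in `X` and `G` by a
derivation of `Λ` of the form `e_c * D_b`, which contributes nothing to the coefficient of `e_t`
if `b ≠ c` and either `b` occurs in `t` or `c` does not.
-/

/-- The homogenised central factorial `∏_{i < p} (2 x + (p - 1 - 2 i) √y)`. The recursion splits
off the two outermost factors, whose product `4 x² - (p + 1)² y` is free of the square root. -/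
def centralFactorial {B : Type*} [Ring B] (x y : B) : ℕ → B
  | 0 => 1
  | 1 => 2 • x
  | p + 2 => (4 • x ^ 2 - (p + 1) ^ 2 • y) * centralFactorial x y p

lemma centralFactorial_mem {B S : Type*} [Ring B] [SetLike S B] [AddSubgroupClass S B] {W : S}
    {X G : B} (h1 : 1 ∈ W) (hX : ∀ z ∈ W, X * z ∈ W) (hG : ∀ z ∈ W, G * z ∈ W) (p : ℕ) :
    centralFactorial X G p ∈ W := by
  induction p using Nat.twoStepInduction with
  | zero => exact h1
  | one => exact nsmul_mem (by simpa using hX 1 h1) 2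
  | more p ih _ =>
    simp only [centralFactorial, sub_mul, smul_mul_assoc, sq X, mul_assoc]
    exact sub_mem (nsmul_mem (hX _ (hX _ ih)) _) (nsmul_mem (hG _ ih) _)

section CommRing
variable {S M : Type*} [CommRing S] [AddCommGroup M] [Module S M] {x y γ : S} {τ θ : M}

lemma centralFactorial_smul_eq_of_smul_eq (hθ : x • θ = y • θ) (p : ℕ) :
    centralFactorial x γ p • θ = centralFactorial y γ p • θ := by
  induction p using Nat.twoStepInduction with
  | zero => rfl
  | one => simp only [centralFactorial, smul_assoc, hθ]
  | more p ih _ =>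
    simp only [centralFactorial, nsmul_eq_mul]
    push_cast
    linear_combination (norm := module) (4 * x ^ 2 - (p + 1) ^ 2 * γ) • ih
      + (4 * (x + y) * centralFactorial y γ p) • hθ

lemma centralFactorial_smul_reflect (hθ : x • θ = y • θ) (hτ : (x - y) ^ 2 • τ = γ • τ + x • θ)
    (p : ℕ) :
    (x + y - p * (x - y)) • centralFactorial x γ p • τ =
      (x + y + p * (x - y)) • centralFactorial y γ p • τ := by
  induction p using Nat.twoStepInduction with
  | zero => simp [centralFactorial]
  | one => simp only [centralFactorial]; module
  | more p ih _ =>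
    have hE := centralFactorial_smul_eq_of_smul_eq (γ := γ) hθ p
    simp only [centralFactorial, nsmul_eq_mul]
    push_cast
    set E := centralFactorial x γ p
    set E' := centralFactorial y γ p
    set u : S := y + y - (p + 1) * (x - y)
    set v : S := x + x + (p + 1) * (x - y)
    linear_combination (norm := module) (u * v) • ih + ((p + 1) ^ 2 * (u * E - v * E')) • hτ
      + ((p + 1) ^ 2 * v * x) • hE - (2 * (p + 2) * (p + 1) ^ 2 * x * E) • hθ

-- Later `x` and `y` are the multiplication operators `(· * X)` and `-(X * ·)`, `d p = D (X * E_p)`,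
-- and `hd` is the Leibniz rule for `D`.
lemma two_nsmul_eq_centralFactorial_smul_add (hθ : x • θ = y • θ)
    (hτ : (x - y) ^ 2 • τ = γ • τ + x • θ) {d : ℕ → M} (h0 : d 0 = τ)
    (h1 : d 1 = 2 • (x • τ + y • τ))
    (hd : ∀ p, d (p + 2) =
      4 • (centralFactorial x γ p • x • x • τ + y • centralFactorial x γ p • x • τ + y • y • d p)
        - (p + 1) ^ 2 • (γ • d p - 2 • centralFactorial x γ p • x • θ)) (p : ℕ) :
    2 • d p = (p + 1) • (centralFactorial x γ p • τ + centralFactorial y γ p • τ) := by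
  induction p using Nat.twoStepInduction with
  | zero => simp only [h0, centralFactorial]; module
  | one => simp only [h1, centralFactorial]; module
  | more p ih _ =>
    have hE := centralFactorial_smul_eq_of_smul_eq (γ := γ) hθ p
    have hS := centralFactorial_smul_reflect hθ hτ p
    simp only [hd, centralFactorial, nsmul_eq_mul]
    push_cast
    set E := centralFactorial x γ p
    set E' := centralFactorial y γ p
    linear_combination (norm := skip) (4 * y ^ 2 - (p + 1) ^ 2 * γ) • ih
      + (2 * (2 * y - (p + 1) * (x - y))) • hS - (2 * (p + 1) ^ 2 * (E + E')) • hτ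
      + (2 * (p + 1) ^ 2 * x) • hE
    module

end CommRing

lemma centralFactorial_smul_of_right {B S : Type*} [Ring B] [CommRing S] [Module S B]
    {x γ : S} {X G : B} (hx : ∀ z : B, x • z = z * X) (hγ : ∀ z : B, γ • z = z * G) (p : ℕ)
    (z : B) :
    centralFactorial x γ p • z = z * centralFactorial X G p := by
  induction p using Nat.twoStepInduction generalizing z with
  | zero => simp [centralFactorial]
  | one => simp only [centralFactorial, smul_assoc, hx, mul_smul_comm]
  | more p ih _ =>
    rw [centralFactorial, centralFactorial, mul_comm, mul_smul, ih, ← mul_assoc]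
    simp only [sub_smul, smul_assoc, sq x, mul_smul, hx, hγ, mul_sub, mul_smul_comm, sq X,
      mul_assoc]

lemma centralFactorial_smul_of_left {B S : Type*} [Ring B] [CommRing S] [Module S B]
    {y γ : S} {X G : B} (hy : ∀ z : B, y • z = -(X * z)) (hγ : ∀ z : B, γ • z = G * z)
    (p : ℕ) (z : B) :
    centralFactorial y γ p • z = (-1 : ℤ) ^ p • (centralFactorial X G p * z) := by
  induction p using Nat.twoStepInduction with
  | zero => simp [centralFactorial]
  | one => simp only [centralFactorial, smul_assoc, hy, smul_mul_assoc]; module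
  | more p ih _ =>
    rw [centralFactorial, centralFactorial, mul_smul, ih, mul_assoc]
    simp only [sub_smul, smul_assoc, sq y, mul_smul, hy, hγ, sub_mul, smul_mul_assoc, sq X,
      mul_assoc, mul_neg, neg_neg, mul_smul_comm]
    module

open scoped IsMulCommutative in
lemma exists_commRing_module_of_forall_commute.{u} {M : Type u} [AddCommGroup M]
    {s : Set (M →+ M)} (hs : ∀ f ∈ s, ∀ g ∈ s, ∀ m, f (g m) = g (f m)) :
    ∃ (S : Type u) (_ : CommRing S) (_ : Module S M), ∀ f ∈ s, ∃ x : S, ∀ m, x • m = f m := by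
  have := Subring.isMulCommutative_closure (R := AddMonoid.End M) (s := s)
    fun f hf g hg => AddMonoidHom.ext (hs f hf g hg)
  exact ⟨Subring.closure (R := AddMonoid.End M) s, inferInstance, inferInstance,
    fun f hf => ⟨⟨f, Subring.subset_closure hf⟩, fun _ => rfl⟩⟩

lemma exists_commRing_module_mulRight_mulLeft.{u} {B : Type u} [Ring B] (X : B) {G : B}
    (hG : ∀ z, Commute G z) :
    ∃ (S : Type u) (_ : CommRing S) (_ : Module S B) (x y γ : S), (∀ z : B, x • z = z * X) ∧
      (∀ z : B, y • z = -(X * z)) ∧ ∀ z : B, γ • z = G * z := by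
  let s : Set (B →+ B) :=
    {AddMonoidHom.mulRight X, -AddMonoidHom.mulLeft X, AddMonoidHom.mulLeft G}
  have hs : ∀ f ∈ s, ∀ g ∈ s, ∀ z, f (g z) = g (f z) := by
    rintro _ (rfl | rfl | rfl) _ (rfl | rfl | rfl) z <;>
      simp [mul_assoc, (hG X).left_comm]
  obtain ⟨S, _, _, hS⟩ := exists_commRing_module_of_forall_commute hs
  obtain ⟨x, hx⟩ := hS _ (.inl rfl)
  obtain ⟨y, hy⟩ := hS _ (.inr (.inl rfl))
  obtain ⟨γ, hγ⟩ := hS _ (.inr (.inr rfl))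
  exact ⟨S, _, _, x, y, γ, hx, hy, hγ⟩

theorem two_nsmul_apply_mul_centralFactorial {B : Type*} [Ring B] {X G τ θ : B}
    (hG : ∀ z, Commute G z) (hθ : θ * X = -(X * θ))
    (hτ : τ * X ^ 2 + 2 • (X * τ * X) + X ^ 2 * τ = G * τ + θ * X)
    (D : B →+ B) (hD1 : D 1 = 0) (hDX : ∀ z, D (X * z) = τ * z - X * D z)
    (hDG : ∀ z, D (G * z) = G * D z - 2 • (θ * z)) (p : ℕ) :
    2 • D (X * centralFactorial X G p) =
      (p + 1) • (τ * centralFactorial X G p + (-1 : ℤ) ^ p • (centralFactorial X G p * τ)) := by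
  obtain ⟨S, _, _, x, y, γ, hx, hy, hγ⟩ := exists_commRing_module_mulRight_mulLeft X hG
  have hγ' (z : B) : γ • z = z * G := (hγ z).trans (hG z)
  have hDX1 : D X = τ := by simpa [hD1] using hDX 1
  have hDXX (z : B) : D (X * (X * z)) = τ * (X * z) + -(X * (τ * z)) + X * (X * D z) := by
    rw [hDX, hDX]; noncomm_ring
  have h := two_nsmul_eq_centralFactorial_smul_add (x := x) (y := y) (γ := γ) (τ := τ) (θ := θ)
    (d := fun p => D (X * centralFactorial X G p)) (by rw [hx, hy, hθ]) ?_ ?_ ?_ (fun p => ?_) p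
  · simp only [centralFactorial_smul_of_right hx hγ', centralFactorial_smul_of_left hy hγ] at h
    exact h
  · rw [hγ, hx, ← hτ, sub_sq]
    simp only [add_smul, sub_smul, sq x, sq y, mul_smul, hx, hy, sq X, ofNat_smul_eq_nsmul,
      mul_neg, neg_neg, neg_mul, smul_neg, mul_assoc]
    module
  · simp [centralFactorial, hDX1]
  · simp only [centralFactorial, mul_smul_comm, map_nsmul, hDX, hDX1, hx, hy, sub_eq_add_neg]
  · have hX (z : B) : X * ((4 • X ^ 2 - (p + 1) ^ 2 • G) * z) =
        4 • (X * (X * (X * z))) - (p + 1) ^ 2 • (G * (X * z)) := by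
      simp only [sub_mul, mul_sub, smul_mul_assoc, mul_smul_comm, sq X, mul_assoc,
        (hG X).left_comm]
    simp only [centralFactorial, hX, map_sub, map_nsmul, hDXX, hDG,
      centralFactorial_smul_of_right hx hγ', hx, hy, hγ, mul_assoc, mul_neg, neg_neg]

section SpanDegreeLT
variable (R : Type*) {B : Type*} [CommRing R] [Ring B] [Algebra R B] (X G : B)

/-- The span of the monomials in `G` and `X` of degree less than `N` in `X`, with no bound on the
degree in `G`: the lower-order terms relative to `X ^ N`. -/
def spanDegreeLT (N : ℕ) : Submodule R B :=
  Submodule.span R {z | ∃ m, ∃ q < N, z = G ^ m * X ^ q}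

variable {X G} {N : ℕ} {z : B}

lemma pow_mem_spanDegreeLT {q : ℕ} (hq : q < N) : X ^ q ∈ spanDegreeLT R X G N :=
  Submodule.subset_span ⟨0, q, hq, by simp⟩

lemma spanDegreeLT_mono {M : ℕ} (h : M ≤ N) : spanDegreeLT R X G M ≤ spanDegreeLT R X G N :=
  Submodule.span_mono fun _ ⟨m, q, hq, hz⟩ => ⟨m, q, hq.trans_le h, hz⟩

lemma mul_mem_spanDegreeLT (hz : z ∈ spanDegreeLT R X G N) : G * z ∈ spanDegreeLT R X G N := by
  refine Submodule.span_le (p := (spanDegreeLT R X G N).comap (LinearMap.mulLeft R G)).2 ?_ hz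
  rintro _ ⟨m, q, hq, rfl⟩
  exact Submodule.subset_span ⟨m + 1, q, hq, by simp [_root_.pow_succ', mul_assoc]⟩

lemma mul_mem_spanDegreeLT_succ (hG : Commute G X) (hz : z ∈ spanDegreeLT R X G N) :
    X * z ∈ spanDegreeLT R X G (N + 1) := by
  refine Submodule.span_le (p := (spanDegreeLT R X G (N + 1)).comap (LinearMap.mulLeft R X)).2 ?_ hz
  rintro _ ⟨m, q, hq, rfl⟩
  refine Submodule.subset_span ⟨m, q + 1, by lia, ?_⟩
  rw [LinearMap.mulLeft_apply, ← mul_assoc, ← (hG.pow_left m).eq, mul_assoc, _root_.pow_succ']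

lemma centralFactorial_sub_mem_spanDegreeLT (hG : Commute G X) (p : ℕ) :
    centralFactorial X G p - 2 ^ p • X ^ p ∈ spanDegreeLT R X G p := by
  induction p using Nat.twoStepInduction with
  | zero => simp [centralFactorial]
  | one => simp [centralFactorial]
  | more p ih _ =>
    have hE : centralFactorial X G p ∈ spanDegreeLT R X G (p + 1) := by
      rw [← sub_add_cancel (centralFactorial X G p) (2 ^ p • X ^ p)]
      exact add_mem (spanDegreeLT_mono R p.le_succ ih)
        (nsmul_mem (pow_mem_spanDegreeLT R p.lt_succ_self) _)
    have hrec : centralFactorial X G (p + 2) - 2 ^ (p + 2) • X ^ (p + 2) =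
        4 • (X * (X * (centralFactorial X G p - 2 ^ p • X ^ p)))
          - (p + 1) ^ 2 • (G * centralFactorial X G p) := by
      simp only [centralFactorial, sub_mul, mul_sub, smul_mul_assoc, mul_smul_comm, sq X, mul_assoc,
        _root_.pow_succ' X]
      module
    rw [hrec]
    exact sub_mem
      (nsmul_mem (mul_mem_spanDegreeLT_succ R hG (mul_mem_spanDegreeLT_succ R hG ih)) _)
      (nsmul_mem (mul_mem_spanDegreeLT R (spanDegreeLT_mono R (by lia) hE)) _)

end SpanDegreeLT

section Exterior
open ExteriorAlgebra

variable {R I : Type*} [CommRing R]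

/-- Contraction of the exterior algebra on `I → R` with the `i`-th coordinate form. -/
def contract (i : I) : ExteriorAlgebra R (I → R) →ₗ[R] ExteriorAlgebra R (I → R) :=
  CliffordAlgebra.contractLeft (Q := 0) (LinearMap.proj i)

lemma contract_ι_mul (i : I) (v : I → R) (z : ExteriorAlgebra R (I → R)) :
    contract i (ι R v * z) = v i • z - ι R v * contract i z :=
  CliffordAlgebra.contractLeft_ι_mul (Q := 0) _ v z

lemma contract_one (i : I) : contract i (1 : ExteriorAlgebra R (I → R)) = 0 :=
  CliffordAlgebra.contractLeft_one (Q := 0) _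

lemma contract_contract (i : I) (z : ExteriorAlgebra R (I → R)) : contract i (contract i z) = 0 :=
  CliffordAlgebra.contractLeft_contractLeft _ _

lemma contract_comm (i k : I) (z : ExteriorAlgebra R (I → R)) :
    contract i (contract k z) = -contract k (contract i z) :=
  CliffordAlgebra.contractLeft_comm _ _ _

lemma contract_ιMulti (i : I) (p : ℕ) (v : Fin (p + 1) → I → R) :
    contract i (ιMulti R (p + 1) v) =
      ∑ k : Fin (p + 1), ((-1) ^ (k : ℕ) * v k i) • ιMulti R p (fun l => v (k.succAbove l)) := by
  induction p with
  | zero =>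
    rw [ιMulti_succ_apply, contract_ι_mul]
    simp [contract_one]
  | succ p ih =>
    rw [ιMulti_succ_apply, contract_ι_mul, ih, Fin.sum_univ_succ (n := p + 1), Finset.mul_sum,
      sub_eq_add_neg, ← Finset.sum_neg_distrib]
    congr 1
    · simp [Matrix.vecTail, Function.comp_def]
    · refine Finset.sum_congr rfl fun k _ => ?_
      rw [ιMulti_succ_apply (n := p)]
      simp [Matrix.vecTail, Function.comp_def, _root_.pow_succ]

/-- The functional reading off the coefficient of the monomial `e_a ∧ e_b ∧ ⋯` of a list
`[a, b, …]`, as the iterated contraction along the list. -/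
def coeffList : List I → ExteriorAlgebra R (I → R) →ₗ[R] R
  | [] => algebraMapInv.toLinearMap
  | a :: l => coeffList l ∘ₗ contract a

lemma coeffList_cons (a : I) (l : List I) (z : ExteriorAlgebra R (I → R)) :
    coeffList (a :: l) z = coeffList l (contract a z) :=
  rfl

lemma coeffList_contract {l : List I} {b : I} (hb : b ∈ l) (z : ExteriorAlgebra R (I → R)) :
    coeffList l (contract b z) = 0 := by
  induction l generalizing z with
  | nil => simp at hb
  | cons a l ih =>
    rw [coeffList_cons]
    by_cases h : b = a
    · rw [h, contract_contract, map_zero]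
    · rw [contract_comm, map_neg, ih (List.mem_of_ne_of_mem h hb), neg_zero]

lemma coeffList_ιMulti (p : ℕ) (t : Fin p → I) (v : Fin p → I → R) :
    coeffList (List.ofFn t) (ιMulti R p v) = (Matrix.of fun i k => v k (t i)).det := by
  induction p with
  | zero => simp [coeffList]
  | succ p ih =>
    rw [List.ofFn_succ, coeffList_cons, contract_ιMulti, map_sum, Matrix.det_succ_row_zero]
    refine Finset.sum_congr rfl fun k _ => ?_
    rw [map_smul, ih, smul_eq_mul]
    rfl

variable [DecidableEq I]

/-- The basis vector `e_i` of `I → R` in the exterior algebra. -/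
def basisVec (i : I) : ExteriorAlgebra R (I → R) := ι R (Pi.single i 1)

lemma contract_basisVec_mul (i a : I) (z : ExteriorAlgebra R (I → R)) :
    contract i (basisVec a * z) =
      (if i = a then (1 : R) else 0) • z - basisVec a * contract i z := by
  rw [basisVec, contract_ι_mul, Pi.single_apply]

lemma coeffList_basisVec_mul {l : List I} {c : I} (hc : c ∉ l) (z : ExteriorAlgebra R (I → R)) :
    coeffList l (basisVec c * z) = 0 := by
  induction l generalizing z with
  | nil => simp [coeffList, basisVec, algebraMapInv]
  | cons a l ih =>
    rw [List.mem_cons, not_or] at hc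
    rw [coeffList_cons, contract_basisVec_mul, if_neg (Ne.symm hc.1), zero_smul, zero_sub, map_neg,
      ih hc.2, neg_zero]

lemma coeffList_basisVec_mul_contract {l : List I} {b c : I} (hbc : b ≠ c) (h : b ∈ l ∨ c ∉ l)
    (z : ExteriorAlgebra R (I → R)) : coeffList l (basisVec c * contract b z) = 0 := by
  rcases h with h | h
  · have hswap := contract_basisVec_mul b c z
    rw [if_neg hbc, zero_smul, zero_sub, ← neg_eq_iff_eq_neg] at hswap
    rw [← hswap, map_neg, coeffList_contract h, neg_zero]
  · exact coeffList_basisVec_mul h _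

end Exterior

section Slice
open ExteriorAlgebra

variable {R I A : Type*} [CommRing R] [Ring A] [Algebra R A]

/-- Application of a functional to the first tensor factor, which reads off coefficients in `A`. -/
def slice (ψ : ExteriorAlgebra R (I → R) →ₗ[R] R) : ExteriorAlgebra R (I → R) ⊗[R] A →ₗ[R] A :=
  (TensorProduct.lid R A).toLinearMap ∘ₗ ψ.rTensor A

variable (ψ : ExteriorAlgebra R (I → R) →ₗ[R] R)

lemma slice_tmul (x : ExteriorAlgebra R (I → R)) (y : A) : slice ψ (x ⊗ₜ y) = ψ x • y := by
  simp [slice]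

lemma slice_one_tmul_mul (y : A) (z : ExteriorAlgebra R (I → R) ⊗[R] A) :
    slice ψ ((1 ⊗ₜ y) * z) = y * slice ψ z := by
  induction z using TensorProduct.induction_on with
  | zero => simp
  | tmul a b => simp [slice_tmul]
  | add a b ha hb => simp only [mul_add, map_add, ha, hb]

lemma slice_mul_one_tmul (y : A) (z : ExteriorAlgebra R (I → R) ⊗[R] A) :
    slice ψ (z * (1 ⊗ₜ y)) = slice ψ z * y := by
  induction z using TensorProduct.induction_on with
  | zero => simp
  | tmul a b => simp [slice_tmul]
  | add a b ha hb => simp only [add_mul, map_add, ha, hb]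

lemma slice_tmul_one_mul (x : ExteriorAlgebra R (I → R)) (z : ExteriorAlgebra R (I → R) ⊗[R] A) :
    slice ψ ((x ⊗ₜ 1) * z) = slice (ψ ∘ₗ LinearMap.mulLeft R x) z := by
  induction z using TensorProduct.induction_on with
  | zero => simp
  | tmul a b => simp [slice_tmul]
  | add a b ha hb => simp only [mul_add, map_add, ha, hb]

/-- The antisymmetrized monomial `∑_π sign(π) s_{a_{π(1)}} ⋯ s_{a_{π(p)}}`. -/
def antisymmMonomial (s : I → A) (p : ℕ) (a : Fin p → I) : A :=
  ∑ π : Equiv.Perm (Fin p), (Equiv.Perm.sign π : ℤ) • (List.ofFn fun i => s (a (π i))).prod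

variable [Fintype I] [DecidableEq I] (s : I → A)

/-- The generic element `∑ₐ eₐ ⊗ sₐ`, whose powers generate the antisymmetrized monomials. -/
def genericElt : ExteriorAlgebra R (I → R) ⊗[R] A := ∑ a, basisVec a ⊗ₜ s a

lemma genericElt_pow (p : ℕ) : genericElt s ^ p =
    ∑ a : Fin p → I, ιMulti R p (fun i => Pi.single (a i) 1) ⊗ₜ[R]
      (List.ofFn fun i => s (a i)).prod := by
  induction p with
  | zero => simp [Algebra.TensorProduct.one_def]
  | succ p ih =>
    rw [_root_.pow_succ', ih, genericElt, Finset.sum_mul_sum, ← Fintype.sum_prod_type',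
      ← (Fin.consEquiv fun _ => I).sum_comp]
    refine Finset.sum_congr rfl fun x _ => ?_
    rw [ιMulti_succ_apply, List.ofFn_succ, List.prod_cons, Algebra.TensorProduct.tmul_mul_tmul]
    simp [Fin.consEquiv, Matrix.vecTail, Function.comp_def, basisVec]

lemma slice_genericElt_pow (p : ℕ) : slice ψ (genericElt s ^ p) =
    ∑ a : Fin p → I, ψ (ιMulti R p fun i => Pi.single (a i) 1) •
      (List.ofFn fun i => s (a i)).prod := by
  simp only [genericElt_pow, map_sum, slice_tmul]

lemma slice_coeffList_genericElt_pow (p : ℕ) (t : Fin p → I) :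
    slice (coeffList (R := R) (List.ofFn t)) (genericElt s ^ p) = antisymmMonomial s p t := by
  simp only [slice_genericElt_pow, coeffList_ιMulti, Matrix.det_apply, Finset.sum_smul,
    antisymmMonomial]
  rw [Finset.sum_comm]
  refine Finset.sum_congr rfl fun π _ => ?_
  rw [Finset.sum_eq_single fun i => t (π i)]
  · simp [Units.smul_def, Int.cast_smul_eq_zsmul]
  · intro a _ ha
    obtain ⟨i, hi⟩ := Function.ne_iff.1 ha
    rw [Finset.prod_eq_zero (Finset.mem_univ i), smul_zero, zero_smul]
    simp [Pi.single_apply, Ne.symm hi]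
  · simp

lemma sum_smul_sign_smul_prod_perm (p : ℕ) (π : Equiv.Perm (Fin p)) :
    ∑ a : Fin p → I, ψ (ιMulti R p fun i => Pi.single (a i) 1) •
        (Equiv.Perm.sign π : ℤ) • (List.ofFn fun i => s (a (π i))).prod =
      slice ψ (genericElt s ^ p) := by
  rw [slice_genericElt_pow]
  refine Fintype.sum_equiv (Equiv.arrowCongr π.symm (Equiv.refl I)) _ _ fun a => ?_
  have hsign := (ιMulti R p (M := I → R)).map_perm (fun i => Pi.single (a i) 1) π
  rw [smul_comm, ← smul_assoc, ← map_zsmul, ← Units.smul_def, ← hsign]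
  rfl

lemma factorial_nsmul_slice_genericElt_pow (p : ℕ) :
    p ! • slice ψ (genericElt s ^ p) =
      ∑ a : Fin p → I, ψ (ιMulti R p fun i => Pi.single (a i) 1) • antisymmMonomial s p a := by
  simp only [antisymmMonomial, Finset.smul_sum]
  rw [Finset.sum_comm, Finset.sum_congr rfl fun π _ => sum_smul_sign_smul_prod_perm ψ s p π]
  simp [Fintype.card_perm]

end Slice

lemma slice_genericElt_pow_mem_span {K I A : Type*} [Field K] [CharZero K] [Ring A] [Algebra K A]
    [Fintype I] [DecidableEq I] (ψ : ExteriorAlgebra K (I → K) →ₗ[K] K) (s : I → A) (p : ℕ) :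
    slice ψ (genericElt s ^ p) ∈ Submodule.span K (Set.range (antisymmMonomial s p)) := by
  have hp : (p ! : K) ≠ 0 := by exact_mod_cast p.factorial_ne_zero
  rw [← Submodule.smul_mem_iff _ hp, Nat.cast_smul_eq_nsmul, factorial_nsmul_slice_genericElt_pow]
  exact Submodule.sum_mem _ fun a _ => Submodule.smul_mem _ _ (Submodule.subset_span ⟨a, rfl⟩)

section OspFamily
open ExteriorAlgebra

lemma ι_mul_ι_swap {R M : Type*} [CommRing R] [AddCommGroup M] [Module R M] (v w : M) :
    ι R v * ι R w = -(ι R w * ι R v) :=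
  eq_neg_of_add_eq_zero_left (ι_add_mul_swap v w)

lemma commute_ι_mul_ι {R M : Type*} [CommRing R] [AddCommGroup M] [Module R M] (v w : M)
    (z : ExteriorAlgebra R M) : Commute (ι R v * ι R w) z := by
  induction z using ExteriorAlgebra.induction with
  | algebraMap r => exact Algebra.commute_algebraMap_right r _
  | ι u =>
    rw [commute_iff_eq, mul_assoc, ι_mul_ι_swap w u, mul_neg, ← mul_assoc, ι_mul_ι_swap v u,
      neg_mul, neg_neg, mul_assoc]
  | mul x y hx hy => exact hx.mul_right hy
  | add x y hx hy => exact hx.add_right hy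

variable {R I A : Type*} [CommRing R] [Ring A] [Algebra R A]

/-- The defining relations of the odd generators of `osp(1|2n)`, for an arbitrary antisymmetric
form `g` in place of the symplectic metric. -/
structure IsOspFamily (g : I → I → R) (s : I → A) : Prop where
  antisymm (a b : I) : g a b = -g b a
  lie_anticomm (a b c : I) : ⁅s a * s b + s b * s a, s c⁆ = -(g a c • s b) - g b c • s a

/-- Contraction of the first tensor factor with the `i`-th coordinate form. -/
def contractTensor (i : I) :
    ExteriorAlgebra R (I → R) ⊗[R] A →ₗ[R] ExteriorAlgebra R (I → R) ⊗[R] A :=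
  (contract i).rTensor A

lemma contractTensor_tmul (i : I) (x : ExteriorAlgebra R (I → R)) (y : A) :
    contractTensor i (x ⊗ₜ[R] y) = contract i x ⊗ₜ y :=
  rfl

lemma contractTensor_one (i : I) :
    contractTensor i (1 : ExteriorAlgebra R (I → R) ⊗[R] A) = 0 := by
  rw [Algebra.TensorProduct.one_def, contractTensor_tmul, contract_one, TensorProduct.zero_tmul]

lemma slice_coeffList_contractTensor {l : List I} {i : I} (hi : i ∈ l)
    (z : ExteriorAlgebra R (I → R) ⊗[R] A) : slice (coeffList l) (contractTensor i z) = 0 := by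
  induction z using TensorProduct.induction_on with
  | zero => simp
  | tmul x y => rw [contractTensor_tmul, slice_tmul, coeffList_contract hi, zero_smul]
  | add x y hx hy => simp only [map_add, hx, hy, add_zero]

variable [Fintype I] [DecidableEq I] (g : I → I → R) (s : I → A)

/-- The vector `∑_c g_{ac} e_c` dual to `e_a` under the form `g`, which appears when the relations
of an osp family are applied to the generic element. -/
def lowered (a : I) : ExteriorAlgebra R (I → R) := ∑ c, g a c • basisVec c

/-- The bivector `-∑_{b,c} g_{bc} e_b e_c` of the form `g`, used as the second argument of
`centralFactorial`. -/
def bivector : ExteriorAlgebra R (I → R) := -∑ b, basisVec b * lowered g b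

lemma lowered_eq_ι (a : I) : lowered g a = ι R (g a) := by
  simp only [lowered, basisVec, ← map_smul, ← map_sum]
  congr 1
  ext i
  simp [Pi.single_apply]

lemma commute_bivector_tmul_one (z : ExteriorAlgebra R (I → R) ⊗[R] A) :
    Commute (bivector g ⊗ₜ[R] (1 : A)) z := by
  have hG (x : ExteriorAlgebra R (I → R)) : Commute (bivector g) x :=
    (Commute.sum_left _ _ _ fun b _ => by
      rw [lowered_eq_ι]; exact commute_ι_mul_ι _ _ x).neg_left
  induction z using TensorProduct.induction_on with
  | zero => exact Commute.zero_right _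
  | tmul x y => simp only [commute_iff_eq, Algebra.TensorProduct.tmul_mul_tmul, (hG x).eq, one_mul,
      mul_one]
  | add x y hx hy => exact hx.add_right hy

lemma contract_lowered_mul (i a : I) (z : ExteriorAlgebra R (I → R)) :
    contract i (lowered g a * z) = g a i • z - lowered g a * contract i z := by
  rw [lowered_eq_ι, contract_ι_mul]

variable {g} in
lemma contract_bivector_mul (hg : ∀ a b, g a b = -g b a) (i : I)
    (z : ExteriorAlgebra R (I → R)) :
    contract i (bivector g * z) = bivector g * contract i z - 2 • (lowered g i * z) := by
  have hsum : ∑ b, basisVec b * g b i • z = -(lowered g i * z) := by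
    rw [lowered, Finset.sum_mul, ← Finset.sum_neg_distrib]
    refine Finset.sum_congr rfl fun b _ => ?_
    rw [hg b i, mul_smul_comm, smul_mul_assoc, neg_smul]
  have hcontract : contract i (bivector g * z) =
      -(lowered g i * z) + ∑ b, basisVec b * g b i • z + bivector g * contract i z := by
    simp only [bivector, neg_mul, Finset.sum_mul, map_neg, map_sum, mul_assoc,
      contract_basisVec_mul, contract_lowered_mul, mul_sub, Finset.sum_sub_distrib, ite_smul,
      one_smul, zero_smul, Finset.sum_ite_eq, Finset.mem_univ, if_true]
    abel
  rw [hcontract, hsum]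
  abel

lemma contractTensor_genericElt_mul (i : I) (z : ExteriorAlgebra R (I → R) ⊗[R] A) :
    contractTensor i (genericElt s * z) =
      (1 ⊗ₜ s i) * z - genericElt s * contractTensor i z := by
  induction z using TensorProduct.induction_on with
  | zero => simp
  | tmul x y =>
    simp only [genericElt, contractTensor_tmul, Finset.sum_mul, map_sum,
      Algebra.TensorProduct.tmul_mul_tmul, contract_basisVec_mul, TensorProduct.sub_tmul,
      Finset.sum_sub_distrib]
    simp [ite_smul, TensorProduct.ite_tmul]
  | add x y hx hy => simp only [mul_add, map_add, hx, hy]; abel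

variable {g} in
lemma contractTensor_bivector_mul (hg : ∀ a b, g a b = -g b a) (i : I)
    (z : ExteriorAlgebra R (I → R) ⊗[R] A) :
    contractTensor i ((bivector g ⊗ₜ 1) * z) =
      (bivector g ⊗ₜ 1) * contractTensor i z - 2 • ((lowered g i ⊗ₜ 1) * z) := by
  induction z using TensorProduct.induction_on with
  | zero => simp
  | tmul x y =>
    simp only [contractTensor_tmul, Algebra.TensorProduct.tmul_mul_tmul, contract_bivector_mul hg,
      TensorProduct.sub_tmul, one_mul, TensorProduct.smul_tmul']
  | add x y hx hy => simp only [mul_add, map_add, hx, hy, smul_add]; abel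

lemma ι_tmul_one_mul_genericElt (v : I → R) :
    (ι R v ⊗ₜ 1) * genericElt s =
      -(genericElt s * (ι R v ⊗ₜ 1)) := by
  simp only [genericElt, basisVec, Finset.mul_sum, Finset.sum_mul,
    Algebra.TensorProduct.tmul_mul_tmul, one_mul, mul_one, ι_mul_ι_swap v, TensorProduct.neg_tmul,
    Finset.sum_neg_distrib]

/-- The derivation of the exterior algebra through which the even generator `s a * s b + s b * s a`
of an osp family acts by commutators on the elements built from `genericElt s` and `bivector g`. -/
def evenDerivation (a b : I) :
    ExteriorAlgebra R (I → R) ⊗[R] A →ₗ[R] ExteriorAlgebra R (I → R) ⊗[R] A :=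
  -(LinearMap.mulLeft R (lowered g a ⊗ₜ 1) ∘ₗ contractTensor b) -
    LinearMap.mulLeft R (lowered g b ⊗ₜ 1) ∘ₗ contractTensor a

lemma evenDerivation_apply (a b : I) (z : ExteriorAlgebra R (I → R) ⊗[R] A) :
    evenDerivation g a b z =
      -((lowered g a ⊗ₜ 1) * contractTensor b z) - (lowered g b ⊗ₜ 1) * contractTensor a z :=
  rfl

lemma evenDerivation_one (a b : I) :
    evenDerivation g a b (1 : ExteriorAlgebra R (I → R) ⊗[R] A) = 0 := by
  simp only [evenDerivation_apply, contractTensor_one, mul_zero, neg_zero, sub_zero]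

lemma evenDerivation_genericElt_mul (a b : I) (z : ExteriorAlgebra R (I → R) ⊗[R] A) :
    evenDerivation g a b (genericElt s * z) =
      (-((lowered g a ⊗ₜ 1) * (1 ⊗ₜ s b)) - (lowered g b ⊗ₜ 1) * (1 ⊗ₜ s a)) * z +
        genericElt s * evenDerivation g a b z := by
  have hX (a : I) (w : ExteriorAlgebra R (I → R) ⊗[R] A) :
      (lowered g a ⊗ₜ 1) * (genericElt s * w) = -(genericElt s * ((lowered g a ⊗ₜ 1) * w)) := by
    rw [← mul_assoc, lowered_eq_ι, ι_tmul_one_mul_genericElt, neg_mul, mul_assoc]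
  simp only [evenDerivation_apply, contractTensor_genericElt_mul, mul_sub, hX]
  noncomm_ring

variable {g} in
lemma evenDerivation_bivector_mul (hg : ∀ a b, g a b = -g b a) (a b : I)
    (z : ExteriorAlgebra R (I → R) ⊗[R] A) :
    evenDerivation g a b ((bivector g ⊗ₜ 1) * z) =
      (bivector g ⊗ₜ 1) * evenDerivation g a b z := by
  have hαβ : (lowered g a ⊗ₜ[R] (1 : A)) * ((lowered g b ⊗ₜ 1) * z) =
      -((lowered g b ⊗ₜ 1) * ((lowered g a ⊗ₜ 1) * z)) := by
    simp only [← mul_assoc, Algebra.TensorProduct.tmul_mul_tmul, lowered_eq_ι,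
      ι_mul_ι_swap (g a) (g b), TensorProduct.neg_tmul, neg_mul]
  have hG (w z : ExteriorAlgebra R (I → R) ⊗[R] A) :
      w * ((bivector g ⊗ₜ 1) * z) = (bivector g ⊗ₜ 1) * (w * z) := by
    rw [← mul_assoc, ← (commute_bivector_tmul_one g w).eq, mul_assoc]
  simp only [evenDerivation_apply, contractTensor_bivector_mul hg, mul_sub, mul_neg,
    mul_smul_comm, hαβ, hG]
  module

variable {g} in
lemma slice_lowered_mul_contractTensor {l : List I} {a b : I}
    (h : ∀ c, g a c ≠ 0 → b ≠ c ∧ (b ∈ l ∨ c ∉ l)) (z : ExteriorAlgebra R (I → R) ⊗[R] A) :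
    slice (coeffList l) ((lowered g a ⊗ₜ 1) * contractTensor b z) = 0 := by
  induction z using TensorProduct.induction_on with
  | zero => simp
  | tmul x y =>
    rw [contractTensor_tmul, Algebra.TensorProduct.tmul_mul_tmul, slice_tmul,
      lowered, Finset.sum_mul, map_sum, Finset.sum_eq_zero, zero_smul]
    intro c _
    rw [smul_mul_assoc, map_smul]
    by_cases hc : g a c = 0
    · rw [hc, zero_smul]
    · rw [coeffList_basisVec_mul_contract (h c hc).1 (h c hc).2, smul_zero]
  | add x y hx hy => rw [map_add, mul_add, map_add, hx, hy, add_zero]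

variable {g s}

namespace IsOspFamily

lemma lie_genericElt (h : IsOspFamily g s) (a b : I) :
    ⁅(1 : ExteriorAlgebra R (I → R)) ⊗ₜ[R] (s a * s b + s b * s a), genericElt s⁆ =
      -((lowered g a ⊗ₜ 1) * (1 ⊗ₜ s b)) - (lowered g b ⊗ₜ 1) * (1 ⊗ₜ s a) := by
  have hs := h.lie_anticomm
  simp only [Ring.lie_def] at hs ⊢
  simp only [genericElt, lowered, Finset.mul_sum, Finset.sum_mul,
    Algebra.TensorProduct.tmul_mul_tmul, one_mul, mul_one, TensorProduct.sum_tmul,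
    ← Finset.sum_sub_distrib, ← Finset.sum_neg_distrib, ← TensorProduct.tmul_sub, hs,
    TensorProduct.smul_tmul, smul_mul_assoc]
  simp only [TensorProduct.tmul_sub, TensorProduct.tmul_neg]

lemma tmul_mul_genericElt_sq (h : IsOspFamily g s) (k : I) :
    (1 ⊗ₜ s k) * genericElt s ^ 2 + 2 • (genericElt s * (1 ⊗ₜ s k) * genericElt s) +
        genericElt s ^ 2 * (1 ⊗ₜ s k) =
      (bivector g ⊗ₜ 1) * (1 ⊗ₜ s k) + (lowered g k ⊗ₜ 1) * genericElt s := by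
  set X : ExteriorAlgebra R (I → R) ⊗[R] A := genericElt s with hX
  set τ : ExteriorAlgebra R (I → R) ⊗[R] A := 1 ⊗ₜ s k with hτ
  have hY : τ * X + X * τ = ∑ b, (basisVec b ⊗ₜ 1) * (1 ⊗ₜ (s k * s b + s b * s k)) := by
    simp only [hX, hτ, genericElt, Finset.mul_sum, Finset.sum_mul, ← Finset.sum_add_distrib,
      Algebra.TensorProduct.tmul_mul_tmul, one_mul, mul_one]
    simp only [TensorProduct.tmul_add]
  have hYX (b : I) (K : ExteriorAlgebra R (I → R) ⊗[R] A) :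
      (basisVec b ⊗ₜ 1) * K * X + X * ((basisVec b ⊗ₜ 1) * K) = (basisVec b ⊗ₜ 1) * ⁅K, X⁆ := by
    have he : X * (basisVec b ⊗ₜ 1) = -((basisVec b ⊗ₜ 1) * X) :=
      eq_neg_iff_add_eq_zero.2 (by rw [basisVec, ι_tmul_one_mul_genericElt, add_neg_cancel])
    rw [← mul_assoc X, he, Ring.lie_def]
    noncomm_ring
  have hbasis (b : I) : (basisVec b ⊗ₜ 1) * ⁅(1 : ExteriorAlgebra R (I → R)) ⊗ₜ[R]
      (s k * s b + s b * s k), X⁆ = (lowered g k ⊗ₜ 1) * (basisVec b ⊗ₜ s b) -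
        ((basisVec b * lowered g b) ⊗ₜ 1) * τ := by
    rw [h.lie_genericElt]
    simp only [mul_sub, mul_neg, hτ, Algebra.TensorProduct.tmul_mul_tmul, mul_one,
      one_mul, basisVec, lowered_eq_ι, ι_mul_ι_swap _ (g k), TensorProduct.neg_tmul, neg_neg]
  have hsum : τ * X ^ 2 + 2 • (X * τ * X) + X ^ 2 * τ =
      (τ * X + X * τ) * X + X * (τ * X + X * τ) := by
    noncomm_ring
  rw [hsum, hY, Finset.sum_mul, Finset.mul_sum, ← Finset.sum_add_distrib]
  simp only [hYX, hbasis, Finset.sum_sub_distrib, ← Finset.mul_sum, ← Finset.sum_mul,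
    ← TensorProduct.sum_tmul, bivector, TensorProduct.neg_tmul, neg_mul]
  rw [← genericElt, sub_eq_neg_add]

lemma lie_centralFactorial (h : IsOspFamily g s) (a b : I) (p : ℕ) :
    ⁅(1 : ExteriorAlgebra R (I → R)) ⊗ₜ[R] (s a * s b + s b * s a),
        centralFactorial (genericElt s) (bivector g ⊗ₜ 1) p⁆ =
      evenDerivation g a b (centralFactorial (genericElt s) (bivector g ⊗ₜ 1) p) := by
  set K : ExteriorAlgebra R (I → R) ⊗[R] A := 1 ⊗ₜ (s a * s b + s b * s a)
  let W : Submodule R (ExteriorAlgebra R (I → R) ⊗[R] A) :=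
    LinearMap.eqLocus (LinearMap.mulLeft R K - LinearMap.mulRight R K) (evenDerivation g a b)
  have hW (z) : z ∈ W ↔ ⁅K, z⁆ = evenDerivation g a b z := Iff.rfl
  have hKmul (w z : ExteriorAlgebra R (I → R) ⊗[R] A) : ⁅K, w * z⁆ = ⁅K, w⁆ * z + w * ⁅K, z⁆ := by
    simp only [Ring.lie_def]; noncomm_ring
  have hKG : ⁅K, bivector g ⊗ₜ[R] (1 : A)⁆ = 0 := by
    rw [Ring.lie_def, (commute_bivector_tmul_one g K).eq, sub_self]
  refine (hW _).1 (centralFactorial_mem ((hW 1).2 ?_) (fun z hz => (hW _).2 ?_)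
    (fun z hz => (hW _).2 ?_) p)
  · rw [evenDerivation_one, Ring.lie_def, mul_one, one_mul, sub_self]
  · rw [hKmul, h.lie_genericElt, (hW z).1 hz, evenDerivation_genericElt_mul]
  · rw [hKmul, hKG, (hW z).1 hz, evenDerivation_bivector_mul h.antisymm, zero_mul, zero_add]

end IsOspFamily

end OspFamily

section HighestWeight
variable {K I A : Type*} [Field K] [Ring A] [Algebra K A] [Fintype I] [DecidableEq I]

/-- The highest weight vector with leading term the antisymmetrized monomial of the tuple `t`: the
coefficient of `e_{t 0} ∧ e_{t 1} ∧ ⋯` in a central factorial of the generic element, normalised so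
that the leading coefficient is `1`. -/
def highestWeightVector (g : I → I → K) (s : I → A) {p : ℕ} (t : Fin p → I) : A :=
  ((2 : K) ^ p)⁻¹ •
    slice (coeffList (List.ofFn t)) (centralFactorial (genericElt s) (bivector g ⊗ₜ 1) p)

lemma slice_mem_span_antisymmMonomial [CharZero K] {g : I → I → K} {s : I → A} {N : ℕ}
    {z : ExteriorAlgebra K (I → K) ⊗[K] A}
    (hz : z ∈ spanDegreeLT K (genericElt s) (bivector g ⊗ₜ 1) N)
    (ψ : ExteriorAlgebra K (I → K) →ₗ[K] K) :
    slice ψ z ∈ Submodule.span K {x | ∃ q, q < N ∧ ∃ a, x = antisymmMonomial s q a} := by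
  rw [← Submodule.mem_comap]
  refine Submodule.span_le.2 ?_ hz
  rintro _ ⟨m, q, hq, rfl⟩
  rw [SetLike.mem_coe, Submodule.mem_comap, Algebra.TensorProduct.tmul_pow, one_pow,
    slice_tmul_one_mul]
  refine Submodule.span_mono ?_ (slice_genericElt_pow_mem_span _ s q)
  rintro _ ⟨a, rfl⟩
  exact ⟨q, hq, a, rfl⟩

lemma highestWeightVector_sub_mem_span [CharZero K] (g : I → I → K) (s : I → A) {p : ℕ}
    (t : Fin p → I) :
    highestWeightVector g s t - antisymmMonomial s p t ∈
      Submodule.span K {x | ∃ q, q < p ∧ ∃ a, x = antisymmMonomial s q a} := by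
  have h := slice_mem_span_antisymmMonomial
    (centralFactorial_sub_mem_spanDegreeLT K (commute_bivector_tmul_one g (genericElt s)) p)
    (coeffList (List.ofFn t))
  have h2 : (2 : K) ^ p ≠ 0 := pow_ne_zero p two_ne_zero
  rw [map_sub, map_nsmul, slice_coeffList_genericElt_pow] at h
  convert Submodule.smul_mem _ ((2 : K) ^ p)⁻¹ h using 1
  rw [smul_sub, ← Nat.cast_smul_eq_nsmul K, Nat.cast_pow, Nat.cast_ofNat, inv_smul_smul₀ h2,
    highestWeightVector]

namespace IsOspFamily
variable {g : I → I → K} {s : I → A} {p : ℕ} {t : Fin p → I}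

lemma commute_highestWeightVector (h : IsOspFamily g s) {a b : I}
    (ha : ∀ c, g a c ≠ 0 → b ≠ c ∧ (b ∈ List.ofFn t ∨ c ∉ List.ofFn t))
    (hb : ∀ c, g b c ≠ 0 → a ≠ c ∧ (a ∈ List.ofFn t ∨ c ∉ List.ofFn t)) :
    Commute (s a * s b + s b * s a) (highestWeightVector g s t) := by
  refine Commute.smul_right ?_ _
  rw [commute_iff_eq, ← sub_eq_zero, ← slice_one_tmul_mul, ← slice_mul_one_tmul, ← map_sub,
    ← Ring.lie_def, h.lie_centralFactorial, evenDerivation_apply, map_sub, map_neg,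
    slice_lowered_mul_contractTensor ha, slice_lowered_mul_contractTensor hb, neg_zero, sub_zero]

lemma mul_highestWeightVector_add [CharZero K] (h : IsOspFamily g s) {k : I}
    (hk : k ∈ List.ofFn t) :
    s k * highestWeightVector g s t + (-1 : K) ^ p • (highestWeightVector g s t * s k) = 0 := by
  set E : ExteriorAlgebra K (I → K) ⊗[K] A := centralFactorial (genericElt s) (bivector g ⊗ₜ 1) p
  have hE : 2 • contractTensor k (genericElt s * E) =
      (p + 1) • ((1 ⊗ₜ s k) * E + (-1 : ℤ) ^ p • (E * (1 ⊗ₜ s k))) :=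
    two_nsmul_apply_mul_centralFactorial (commute_bivector_tmul_one g)
      (by rw [lowered_eq_ι, ι_tmul_one_mul_genericElt]) (h.tmul_mul_genericElt_sq k)
      (contractTensor k).toAddMonoidHom (contractTensor_one k)
      (contractTensor_genericElt_mul s k) (contractTensor_bivector_mul h.antisymm k) p
  have hslice := congrArg (slice (coeffList (List.ofFn t))) hE
  rw [map_nsmul, slice_coeffList_contractTensor hk, smul_zero, map_nsmul, eq_comm,
    ← Nat.cast_smul_eq_nsmul K, smul_eq_zero_iff_right (by exact_mod_cast p.succ_ne_zero), map_add,
    map_zsmul, slice_one_tmul_mul, slice_mul_one_tmul, ← Int.cast_smul_eq_zsmul K, Int.cast_pow,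
    Int.cast_neg, Int.cast_one] at hslice
  rw [highestWeightVector, mul_smul_comm, smul_mul_assoc, smul_comm, ← smul_add, hslice, smul_zero]

end IsOspFamily
end HighestWeight

section OrthosymplecticAlgebra

lemma isOspFamily_σ (n : ℕ) : IsOspFamily (gmat n) (σ n) where
  antisymm a b := by
    unfold gmat
    split_ifs <;> first | omega | norm_num
  lie_anticomm a b c := by
    have h := RingQuot.mkAlgHom_rel ℚ (OspRel.rel a b c)
    simp only [map_sub, map_mul, map_add, ← Algebra.smul_def, map_smul] at h
    simp only [Ring.lie_def, σ, h]
    abel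

lemma eq_add_or_eq_add_of_gmat_ne_zero {n : ℕ} {a c : Fin (2 * n)} (h : gmat n a c ≠ 0) :
    (c : ℕ) = a + n ∨ (a : ℕ) = c + n := by
  unfold gmat at h
  split_ifs at h with h1 h2
  · exact Or.inl h1.2
  · exact Or.inr h2.2
  · exact absurd rfl h

lemma mem_ofFn_hwTuple {n j : ℕ} (hj : j ≤ n) (c : Fin (2 * n)) :
    c ∈ List.ofFn (hwTuple n j hj) ↔ (c : ℕ) < n ∨ j + n ≤ c := by
  have hc := c.isLt
  rw [List.mem_ofFn]
  constructor
  · rintro ⟨i, rfl⟩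
    have := i.isLt
    unfold hwTuple
    split_ifs <;> simp only <;> omega
  · intro h
    by_cases h1 : (c : ℕ) < j
    · refine ⟨⟨c, by omega⟩, ?_⟩
      simp [hwTuple, h1]
    · by_cases h2 : (c : ℕ) < n
      · refine ⟨⟨j + 2 * (c - j), by omega⟩, Fin.ext ?_⟩
        rw [hwTuple, dif_neg (by simp only; omega), dif_pos (by simp only; omega)]
        simp only
        omega
      · refine ⟨⟨j + 2 * (c - n - j) + 1, by omega⟩, Fin.ext ?_⟩
        rw [hwTuple, dif_neg (by simp only; omega), dif_neg (by simp only; omega)]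
        simp only
        omega

lemma commute_σσ_highestWeightVector_hwTuple {n j : ℕ} (hj : j ≤ n) {a b : Fin (2 * n)}
    (hb : (b : ℕ) = a + 1 + n) :
    Commute (σσ n a b) (highestWeightVector (gmat n) (σ n) (hwTuple n j hj)) := by
  refine (isOspFamily_σ n).commute_highestWeightVector (fun c hc => ?_) (fun c hc => ?_) <;>
  · have := eq_add_or_eq_add_of_gmat_ne_zero hc
    have := c.isLt
    simp only [mem_ofFn_hwTuple, ne_eq, Fin.ext_iff] at *
    omega

lemma lowBrkt_le_Omega (n N : ℕ) : lowBrkt n N ≤ Omega n :=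
  Submodule.span_mono fun _ ⟨p, _, a, h⟩ => ⟨p, a, h⟩

end OrthosymplecticAlgebra

/-- For each `0 ≤ j ≤ n` there is a highest weight vector `v_j ∈ Ω` for the
nonstandard action: `v_j` equals `[t_j]` up to lower-order antisymmetrized monomials, commutes
with the simple root generators `σ_{α,\bar{α+1}} = σ_α σ_{\bar{α+1}} + σ_{\bar{α+1}} σ_α`
(`1 ≤ α ≤ n−1`), and satisfies `σ_n ▷ v_j = 0`, i.e.
`σ_n v_j + (−1)^{len(t_j)} v_j σ_n = 0`. -/
theorem stmt16 (n : ℕ) (hn : 1 ≤ n) (j : ℕ) (hj : j ≤ n) :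
    ∃ v ∈ Omega n,
      (v - brkt n (j + 2*(n-j)) (hwTuple n j hj) ∈ lowBrkt n (j + 2*(n-j))) ∧
      (∀ (α : ℕ) (hα : α + 1 < n),
        σσ n ⟨α, by omega⟩ ⟨α + 1 + n, by omega⟩ * v
          = v * σσ n ⟨α, by omega⟩ ⟨α + 1 + n, by omega⟩) ∧
      (σ n ⟨n - 1, by omega⟩ * v
        + ((-1 : ℚ)^(j + 2*(n-j))) • (v * σ n ⟨n - 1, by omega⟩) = 0) := by
  have hlow : highestWeightVector (gmat n) (σ n) (hwTuple n j hj) -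
      brkt n (j + 2*(n-j)) (hwTuple n j hj) ∈ lowBrkt n (j + 2*(n-j)) :=
    highestWeightVector_sub_mem_span (gmat n) (σ n) (hwTuple n j hj)
  have hmem : (⟨n - 1, by omega⟩ : Fin (2*n)) ∈ List.ofFn (hwTuple n j hj) :=
    (mem_ofFn_hwTuple hj _).2 (Or.inl (Nat.sub_one_lt (by omega)))
  refine ⟨highestWeightVector (gmat n) (σ n) (hwTuple n j hj), ?_, hlow,
    fun α hα => commute_σσ_highestWeightVector_hwTuple hj rfl,
    (isOspFamily_σ n).mul_highestWeightVector_add hmem⟩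
  rw [← sub_add_cancel (highestWeightVector _ _ _) (brkt n (j + 2*(n-j)) (hwTuple n j hj))]
  exact add_mem (lowBrkt_le_Omega n _ hlow) (Submodule.subset_span ⟨_, _, rfl⟩)

end
end

section
/- The family of elements [a_1 … a_p] indexed by strictly increasing tuples 1 ≤ a_1 < a_2 < ⋯ < a_p ≤ 2n (including the empty tuple, giving 1) is a basis of the ℚ-vector space Ω; in particular dim_ℚ Ω = 2^{2n}. -/
open scoped BigOperators TensorProduct
open Nat

noncomputable section

/-! The exterior algebra `Λ` of `ℚ^{2n}` carries a representation of `U(osp(1|2n))` in which `σₐ`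
acts by `eₐ ∧ · + (g(eₐ, ·) ⌟ ·) N`, where `N` multiplies `Λᵖ` by `p`. The factor `N` turns the
canonical anticommutation relations into the cubic relations of `osp(1|2n)`. Since the second
summand lowers the degree, applying `[a₁ … a_p]` to `1` gives `p! e_{a₁} ∧ ⋯ ∧ e_{a_p}` plus terms
of lower degree. Hence the linear map `Λ → U(osp(1|2n))`, `e_{a₁} ∧ ⋯ ∧ e_{a_p} ↦ [a₁ … a_p]`,
followed by the action on `1`, is a surjective endomorphism of the finite-dimensional space `Λ`.
It follows that `Λ → U(osp(1|2n))` is injective; its image is `Ω`, and it carries the standard basis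
of `Λ` to the family in question.
-/

section FockSpace

attribute [local instance] LieRing.ofAssociativeRing

variable {R M : Type*} [CommRing R] [AddCommGroup M] [Module R M]

/-- Left multiplication by a vector on the exterior algebra, a creation operator. -/
def creation : M →ₗ[R] Module.End R (ExteriorAlgebra R M) :=
  (Algebra.lmul R (ExteriorAlgebra R M)).toLinearMap ∘ₗ ExteriorAlgebra.ι R

/-- Contraction of the exterior algebra with a linear form, an annihilation operator. -/
def contraction : Module.Dual R M →ₗ[R] Module.End R (ExteriorAlgebra R M) :=
  CliffordAlgebra.contractLeft

theorem creation_apply (v : M) (x : ExteriorAlgebra R M) :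
    creation v x = ExteriorAlgebra.ι R v * x := rfl

theorem contraction_one (d : Module.Dual R M) : contraction d 1 = 0 :=
  CliffordAlgebra.contractLeft_one _ d

theorem contraction_ι_mul (d : Module.Dual R M) (v : M) (x : ExteriorAlgebra R M) :
    contraction d (ExteriorAlgebra.ι R v * x) =
      d v • x - ExteriorAlgebra.ι R v * contraction d x :=
  CliffordAlgebra.contractLeft_ι_mul d v x

theorem creation_anticomm (u v : M) :
    creation (R := R) u * creation v + creation v * creation u = 0 := by
  refine LinearMap.ext fun x => ?_
  simp only [LinearMap.add_apply, Module.End.mul_apply, creation_apply, LinearMap.zero_apply]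
  rw [← mul_assoc, ← mul_assoc, ← add_mul, ExteriorAlgebra.ι_add_mul_swap, zero_mul]

theorem contraction_anticomm (d d' : Module.Dual R M) :
    contraction d * contraction d' + contraction d' * contraction d = 0 :=
  LinearMap.ext fun x => add_eq_zero_iff_eq_neg.2 (CliffordAlgebra.contractLeft_comm d d' x)

theorem contraction_creation_anticomm (d : Module.Dual R M) (v : M) :
    contraction d * creation v + creation v * contraction d = d v • 1 :=
  LinearMap.ext fun x => add_eq_of_eq_sub (contraction_ι_mul d v x)

theorem lie_mul_eq_mul_anticomm_sub {A : Type*} [Ring A] (x y z : A) :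
    ⁅x * y, z⁆ = x * (y * z + z * y) - (x * z + z * x) * y := by
  rw [Ring.lie_def]
  noncomm_ring

theorem lie_creation_mul_contraction_creation (d : Module.Dual R M) (u v : M) :
    ⁅creation u * contraction d, creation v⁆ = d v • creation (R := R) u := by
  rw [lie_mul_eq_mul_anticomm_sub, contraction_creation_anticomm, creation_anticomm, zero_mul,
    sub_zero, mul_smul_one]

theorem lie_creation_mul_contraction_contraction (d d' : Module.Dual R M) (u : M) :
    ⁅creation u * contraction d, contraction d'⁆ = -(d' u • contraction d) := by
  rw [lie_mul_eq_mul_anticomm_sub, contraction_anticomm, add_comm (creation u * _),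
    contraction_creation_anticomm, mul_zero, zero_sub, smul_one_mul]

variable {ι : Type*} [Fintype ι] (b : Module.Basis ι R M)

/-- The number operator `∑ᵢ bᵢ ∧ (bᵢ* ⌟ ·)`, which multiplies the `p`-th exterior power by `p`. -/
def numberOp : Module.End R (ExteriorAlgebra R M) :=
  ∑ i, creation (b i) * contraction (b.coord i)

theorem numberOp_one : numberOp b 1 = 0 := by
  simp [numberOp, contraction_one]

theorem lie_numberOp_creation (v : M) : ⁅numberOp b, creation v⁆ = creation (R := R) v := by
  rw [numberOp, sum_lie]
  simp only [lie_creation_mul_contraction_creation, Module.Basis.coord_apply, ← map_smul,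
    ← map_sum, b.sum_repr]

theorem lie_numberOp_contraction (d : Module.Dual R M) :
    ⁅numberOp b, contraction d⁆ = -contraction d := by
  rw [numberOp, sum_lie]
  simp only [lie_creation_mul_contraction_contraction, Finset.sum_neg_distrib, ← map_smul,
    ← map_sum, b.sum_dual_apply_smul_coord]

theorem numberOp_ι_mul (v : M) (x : ExteriorAlgebra R M) :
    numberOp b (ExteriorAlgebra.ι R v * x) =
      ExteriorAlgebra.ι R v * x + ExteriorAlgebra.ι R v * numberOp b x :=
  sub_eq_iff_eq_add.1 (LinearMap.congr_fun (lie_numberOp_creation b v) x)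

theorem lie_creation_mul_contraction_numberOp (d : Module.Dual R M) (v : M) :
    ⁅creation v * contraction d, numberOp b⁆ = 0 := by
  have hv := lie_numberOp_creation b v
  have hd := lie_numberOp_contraction b d
  rw [Ring.lie_def] at hv hd ⊢
  linear_combination (norm := noncomm_ring) -hv * contraction d - creation v * hd

/-- The operators `v ∧ · + (B v ⌟ ·) N`, with `N` the number operator, by which the odd generators
of the orthosymplectic superalgebra of the form `B` act on the exterior algebra. -/
def ospOp (B : LinearMap.BilinForm R M) : M →ₗ[R] Module.End R (ExteriorAlgebra R M) :=
  creation + LinearMap.mulRight R (numberOp b) ∘ₗ contraction ∘ₗ B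

variable {B : LinearMap.BilinForm R M}

theorem ospOp_apply (v : M) : ospOp b B v = creation v + contraction (B v) * numberOp b := rfl

theorem ospOp_anticomm (hB : ∀ u v, B u v = -B v u) (u v : M) :
    ospOp b B u * ospOp b B v + ospOp b B v * ospOp b B u =
      -(creation u * contraction (B v) + creation v * contraction (B u)) := by
  have hNc (w : M) := lie_numberOp_contraction b (B w)
  have hNe (w : M) := lie_numberOp_creation b w
  have huv := contraction_creation_anticomm (B u) v
  have hvu := contraction_creation_anticomm (B v) u
  simp only [Ring.lie_def] at hNc hNe
  rw [hB, neg_smul] at huv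
  simp only [ospOp_apply]
  -- The coefficients come from moving every `numberOp` to the right end of its product.
  linear_combination (norm := noncomm_ring) creation_anticomm (R := R) u v +
    contraction_anticomm (B u) (B v) * (numberOp b * numberOp b - numberOp b) +
    (huv + hvu) * (numberOp b + 1) + contraction (B u) * hNe v + contraction (B v) * hNe u +
    contraction (B u) * hNc v * numberOp b + contraction (B v) * hNc u * numberOp b

theorem lie_creation_mul_contraction_ospOp (d : Module.Dual R M) (u w : M) :
    ⁅creation u * contraction d, ospOp b B w⁆ =
      d w • creation u - B w u • (contraction d * numberOp b) := by
  have hN := lie_creation_mul_contraction_numberOp b d u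
  have hc := lie_creation_mul_contraction_contraction d (B w) u
  rw [ospOp_apply, lie_add, lie_creation_mul_contraction_creation, sub_eq_add_neg]
  rw [Ring.lie_def] at hN hc ⊢
  rw [← smul_mul_assoc]
  linear_combination (norm := noncomm_ring) hc * numberOp b + contraction (B w) * hN

theorem lie_anticomm_ospOp (hB : ∀ u v, B u v = -B v u) (u v w : M) :
    ⁅ospOp b B u * ospOp b B v + ospOp b B v * ospOp b B u, ospOp b B w⁆ =
      -B u w • ospOp b B v - B v w • ospOp b B u := by
  rw [ospOp_anticomm b hB, neg_lie, add_lie, lie_creation_mul_contraction_ospOp,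
    lie_creation_mul_contraction_ospOp, hB w u, hB w v, ospOp_apply, ospOp_apply]
  module

end FockSpace

section Degree

variable {R M : Type*} [CommRing R] [AddCommGroup M] [Module R M]

variable (R M) in
/-- The elements of degree less than `k` of the exterior algebra. -/
def degreeLT (k : ℕ) : Submodule R (ExteriorAlgebra R M) :=
  Submodule.span R ((fun l : List M => (l.map (ExteriorAlgebra.ι R)).prod) '' {l | l.length < k})

variable {k : ℕ}

theorem degreeLT_le_iff {N : Submodule R (ExteriorAlgebra R M)} :
    degreeLT R M k ≤ N ↔
      ∀ l : List M, l.length < k → (l.map (ExteriorAlgebra.ι R)).prod ∈ N := by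
  rw [degreeLT, Submodule.span_le, Set.image_subset_iff]
  rfl

theorem list_prod_mem_degreeLT {l : List M} (hl : l.length < k) :
    (l.map (ExteriorAlgebra.ι R)).prod ∈ degreeLT R M k :=
  degreeLT_le_iff.1 le_rfl l hl

theorem degreeLT_zero : degreeLT R M 0 = ⊥ :=
  le_bot_iff.1 (degreeLT_le_iff.2 fun l hl => absurd hl l.length.not_lt_zero)

theorem degreeLT_mono : Monotone (degreeLT R M) := fun _ _ hjk =>
  degreeLT_le_iff.2 fun _ hl => list_prod_mem_degreeLT (hl.trans_le hjk)

theorem ιMulti_mem_degreeLT {p : ℕ} (hp : p < k) (v : Fin p → M) :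
    ExteriorAlgebra.ιMulti R p v ∈ degreeLT R M k := by
  rw [ExteriorAlgebra.ιMulti_apply, ← Function.comp_def, ← List.map_ofFn]
  exact list_prod_mem_degreeLT (by rwa [List.length_ofFn])

theorem iSup_degreeLT : ⨆ k, degreeLT R M k = ⊤ := by
  rw [eq_top_iff, ← ExteriorAlgebra.ιMulti_span, Submodule.span_le]
  rintro _ ⟨⟨p, v⟩, rfl⟩
  exact Submodule.mem_iSup_of_mem (p + 1) (ιMulti_mem_degreeLT p.lt_succ_self v)

theorem ι_mul_mem_degreeLT (v : M) {x : ExteriorAlgebra R M} (hx : x ∈ degreeLT R M k) :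
    ExteriorAlgebra.ι R v * x ∈ degreeLT R M (k + 1) := by
  suffices h : degreeLT R M k ≤ (degreeLT R M (k + 1)).comap (creation v) from h hx
  exact degreeLT_le_iff.2 fun l hl => list_prod_mem_degreeLT (l := v :: l) (Nat.succ_lt_succ hl)

theorem contraction_list_prod_mem_degreeLT (d : Module.Dual R M) (l : List M) :
    contraction d (l.map (ExteriorAlgebra.ι R)).prod ∈ degreeLT R M l.length := by
  induction l with
  | nil => exact contraction_one d ▸ zero_mem _
  | cons v l ih =>
    rw [List.map_cons, List.prod_cons, contraction_ι_mul]
    exact sub_mem (Submodule.smul_mem _ _ (list_prod_mem_degreeLT l.length.lt_succ_self))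
      (ι_mul_mem_degreeLT v ih)

theorem contraction_mem_degreeLT (d : Module.Dual R M) {x : ExteriorAlgebra R M}
    (hx : x ∈ degreeLT R M k) : contraction d x ∈ degreeLT R M k := by
  suffices h : degreeLT R M k ≤ (degreeLT R M k).comap (contraction d) from h hx
  exact degreeLT_le_iff.2 fun l hl =>
    degreeLT_mono hl.le (contraction_list_prod_mem_degreeLT d l)

variable {ι : Type*} [Fintype ι] (b : Module.Basis ι R M)

theorem numberOp_list_prod (l : List M) :
    numberOp b (l.map (ExteriorAlgebra.ι R)).prod =
      l.length • (l.map (ExteriorAlgebra.ι R)).prod := by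
  induction l with
  | nil => simp [numberOp_one]
  | cons v l ih =>
    rw [List.map_cons, List.prod_cons, numberOp_ι_mul, ih, mul_smul_comm, List.length_cons,
      succ_nsmul']

theorem numberOp_mem_degreeLT {x : ExteriorAlgebra R M} (hx : x ∈ degreeLT R M k) :
    numberOp b x ∈ degreeLT R M k := by
  suffices h : degreeLT R M k ≤ (degreeLT R M k).comap (numberOp b) from h hx
  refine degreeLT_le_iff.2 fun l hl => ?_
  rw [Submodule.mem_comap, numberOp_list_prod]
  exact nsmul_mem (list_prod_mem_degreeLT hl) _

theorem ospOp_apply_sub_ι_mul_mem_degreeLT (B : LinearMap.BilinForm R M) (v : M)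
    {x : ExteriorAlgebra R M} (hx : x ∈ degreeLT R M k) :
    ospOp b B v x - ExteriorAlgebra.ι R v * x ∈ degreeLT R M k := by
  rw [ospOp_apply, LinearMap.add_apply, creation_apply, add_sub_cancel_left]
  exact contraction_mem_degreeLT _ (numberOp_mem_degreeLT b hx)

end Degree

section Antisymmetrization

variable {R M A : Type*} [CommRing R] [AddCommGroup M] [Module R M] [Ring A] [Algebra R A]

/-- The linear map `v₁ ∧ ⋯ ∧ vₚ ↦ ∑ₛ sign(s) f(v_{s(1)}) ⋯ f(v_{s(p)})` attached to a linear map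
`f` into an algebra. -/
def antisymmetrization (f : M →ₗ[R] A) : ExteriorAlgebra R M →ₗ[R] A :=
  ExteriorAlgebra.liftAlternating fun p =>
    MultilinearMap.alternatization ((MultilinearMap.mkPiAlgebraFin R p A).compLinearMap fun _ => f)

theorem antisymmetrization_ιMulti (f : M →ₗ[R] A) {p : ℕ} (v : Fin p → M) :
    antisymmetrization f (ExteriorAlgebra.ιMulti R p v) =
      ∑ s : Equiv.Perm (Fin p),
        (Equiv.Perm.sign s : ℤ) • (List.ofFn fun i => f (v (s i))).prod := by
  simp [antisymmetrization, MultilinearMap.alternatization_apply, Units.smul_def]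

theorem antisymmetrization_ι_ιMulti {p : ℕ} (v : Fin p → M) :
    antisymmetrization (ExteriorAlgebra.ι R) (ExteriorAlgebra.ιMulti R p v) =
      p ! • ExteriorAlgebra.ιMulti R p v := by
  have h := AlternatingMap.coe_alternatization (ExteriorAlgebra.ιMulti R p (M := M))
  rw [Fintype.card_fin] at h
  rw [← AlternatingMap.smul_apply, ← h, antisymmetrization,
    ExteriorAlgebra.liftAlternating_apply_ιMulti]
  rfl

variable {f : M →ₗ[R] A} {ρ : A →ₐ[R] Module.End R (ExteriorAlgebra R M)}

theorem list_prod_apply_one_sub_mem_degreeLT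
    (hρ : ∀ k v, ∀ x ∈ degreeLT R M k, ρ (f v) x - ExteriorAlgebra.ι R v * x ∈ degreeLT R M k)
    (l : List M) :
    ρ (l.map f).prod 1 - (l.map (ExteriorAlgebra.ι R)).prod ∈ degreeLT R M l.length := by
  induction l with
  | nil => simp
  | cons v l ih =>
    set x := ρ (l.map f).prod 1
    set y := (l.map (ExteriorAlgebra.ι R)).prod
    have hx : x ∈ degreeLT R M (l.length + 1) :=
      (Submodule.sub_mem_iff_left _ (list_prod_mem_degreeLT l.length.lt_succ_self)).1
        (degreeLT_mono l.length.le_succ ih)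
    have hsplit : ρ ((v :: l).map f).prod 1 - ((v :: l).map (ExteriorAlgebra.ι R)).prod =
        (ρ (f v) x - ExteriorAlgebra.ι R v * x) + ExteriorAlgebra.ι R v * (x - y) := by
      simp [x, y, mul_sub]
    rw [hsplit]
    exact add_mem (hρ _ v x hx) (ι_mul_mem_degreeLT v ih)

theorem antisymmetrization_apply_one_sub_mem_degreeLT
    (hρ : ∀ k v, ∀ x ∈ degreeLT R M k, ρ (f v) x - ExteriorAlgebra.ι R v * x ∈ degreeLT R M k)
    {p : ℕ} (v : Fin p → M) :
    ρ (antisymmetrization f (ExteriorAlgebra.ιMulti R p v)) 1 -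
      p ! • ExteriorAlgebra.ιMulti R p v ∈ degreeLT R M p := by
  rw [← antisymmetrization_ι_ιMulti, antisymmetrization_ιMulti, antisymmetrization_ιMulti,
    map_sum, LinearMap.sum_apply, ← Finset.sum_sub_distrib]
  refine sum_mem fun s _ => ?_
  rw [map_zsmul, LinearMap.smul_apply, ← smul_sub]
  have h := list_prod_apply_one_sub_mem_degreeLT hρ (List.ofFn (v ∘ s))
  rw [List.map_ofFn, List.map_ofFn, List.length_ofFn] at h
  exact zsmul_mem h _

variable [Algebra ℚ R]

theorem antisymmetrization_apply_one_surjective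
    (hρ : ∀ k v, ∀ x ∈ degreeLT R M k, ρ (f v) x - ExteriorAlgebra.ι R v * x ∈ degreeLT R M k) :
    Function.Surjective
      (LinearMap.applyₗ (1 : ExteriorAlgebra R M) ∘ₗ ρ.toLinearMap ∘ₗ antisymmetrization f) := by
  set T := LinearMap.applyₗ (1 : ExteriorAlgebra R M) ∘ₗ ρ.toLinearMap ∘ₗ antisymmetrization f
  suffices h : ∀ k, degreeLT R M k ≤ LinearMap.range T by
    exact LinearMap.range_eq_top.1 (top_unique (iSup_degreeLT.ge.trans (iSup_le h)))
  intro k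
  induction k with
  | zero => exact degreeLT_zero.trans_le bot_le
  | succ k ih =>
    refine degreeLT_le_iff.2 fun l hl => ?_
    have hlead := ih (degreeLT_mono (Nat.le_of_lt_succ hl)
      (antisymmetrization_apply_one_sub_mem_degreeLT hρ l.get))
    have hsmul : l.length ! • ExteriorAlgebra.ιMulti R l.length l.get ∈ LinearMap.range T :=
      (Submodule.sub_mem_iff_right _ (LinearMap.mem_range_self T _)).1 hlead
    rw [← Nat.cast_smul_eq_nsmul R, Submodule.smul_mem_iff_of_isUnit _
      (IsUnit.natCast_factorial_of_algebra ℚ _), ExteriorAlgebra.ιMulti_apply,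
      ← Function.comp_def, ← List.map_ofFn, List.ofFn_get] at hsmul
    exact hsmul

theorem antisymmetrization_injective [Module.Finite R (ExteriorAlgebra R M)]
    (hρ : ∀ k v, ∀ x ∈ degreeLT R M k, ρ (f v) x - ExteriorAlgebra.ι R v * x ∈ degreeLT R M k) :
    Function.Injective (antisymmetrization f) :=
  .of_comp (f := fun a => ρ a 1) (OrzechProperty.injective_of_surjective_endomorphism _
    (antisymmetrization_apply_one_surjective hρ))

end Antisymmetrization

section Osp

variable (n : ℕ)

theorem gmat_antisymm (a b : Fin (2 * n)) : gmat n a b = -gmat n b a := by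
  unfold gmat
  split_ifs <;> first | omega | norm_num

/-- The bilinear form on `ℚ^{2n}` with matrix `g`. -/
def gform : LinearMap.BilinForm ℚ (Fin (2 * n) → ℚ) := Matrix.toBilin' (Matrix.of (gmat n))

theorem gform_single (a b : Fin (2 * n)) : gform n (Pi.single a 1) (Pi.single b 1) = gmat n a b :=
  Matrix.toBilin'_single _ a b

theorem gform_antisymm (u v : Fin (2 * n) → ℚ) : gform n u v = -gform n v u := by
  suffices h : gform n = -(gform n).flip from LinearMap.congr_fun₂ h u v
  refine LinearMap.BilinForm.ext_basis (Pi.basisFun ℚ _) fun a b => ?_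
  simp [gform_single, gmat_antisymm n a b]

variable {n} in
theorem lift_ospOp_eq_of_ospRel {x y : FreeAlgebra ℚ (Fin (2 * n))} (h : OspRel n x y) :
    FreeAlgebra.lift ℚ (fun a => ospOp (Pi.basisFun ℚ _) (gform n) (Pi.single a 1)) x =
      FreeAlgebra.lift ℚ (fun a => ospOp (Pi.basisFun ℚ _) (gform n) (Pi.single a 1)) y := by
  obtain ⟨a, b, c⟩ := h
  have hrel := lie_anticomm_ospOp (Pi.basisFun ℚ _) (gform_antisymm n)
    (Pi.single a 1) (Pi.single b 1) (Pi.single c 1)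
  rw [Ring.lie_def, gform_single, gform_single] at hrel
  simp only [Algebra.algebraMap_eq_smul_one, smul_one_mul, map_smul, map_mul, map_add, map_sub,
    FreeAlgebra.lift_ι_apply]
  refine (sub_eq_iff_eq_add'.1 hrel).trans ?_
  rw [neg_smul, ← add_sub_assoc, ← sub_eq_add_neg]

/-- The representation of `U(osp(1|2n))` on the exterior algebra of `ℚ^{2n}`. -/
def extRep : U n →ₐ[ℚ] Module.End ℚ (ExteriorAlgebra ℚ (Fin (2 * n) → ℚ)) :=
  RingQuot.liftAlgHom ℚ
    ⟨FreeAlgebra.lift ℚ fun a => ospOp (Pi.basisFun ℚ _) (gform n) (Pi.single a 1),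
      fun _ _ => lift_ospOp_eq_of_ospRel⟩

/-- The linear extension of `a ↦ σ n a` to `ℚ^{2n}`. -/
def σLin : (Fin (2 * n) → ℚ) →ₗ[ℚ] U n := Fintype.linearCombination ℚ (σ n)

theorem σLin_single (a : Fin (2 * n)) : σLin n (Pi.single a 1) = σ n a := by
  rw [σLin, Fintype.linearCombination_apply_single, one_smul]

theorem extRep_σLin (v : Fin (2 * n) → ℚ) :
    extRep n (σLin n v) = ospOp (Pi.basisFun ℚ _) (gform n) v := by
  suffices h : (extRep n).toLinearMap ∘ₗ σLin n = ospOp (Pi.basisFun ℚ _) (gform n) from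
    LinearMap.congr_fun h v
  refine (Pi.basisFun ℚ _).ext fun a => ?_
  simp [σLin_single, extRep, σ]

theorem antisymmetrization_σLin_injective : Function.Injective (antisymmetrization (σLin n)) :=
  have := Module.Finite.of_basis (Pi.basisFun ℚ (Fin (2 * n))).ExteriorAlgebra
  antisymmetrization_injective (ρ := extRep n) fun k v x hx => by
    rw [extRep_σLin]
    exact ospOp_apply_sub_ι_mul_mem_degreeLT _ _ v hx

theorem brkt_eq_antisymmetrization {p : ℕ} (a : Fin p → Fin (2 * n)) :
    brkt n p a = antisymmetrization (σLin n)
      (ExteriorAlgebra.ιMulti ℚ p fun i => Pi.single (a i) 1) := by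
  simp only [antisymmetrization_ιMulti, σLin_single, brkt]

theorem brkt_orderEmbOfFin (S : Finset (Fin (2 * n))) :
    brkt n S.card (fun i => S.orderEmbOfFin rfl i) =
      antisymmetrization (σLin n) ((Pi.basisFun ℚ (Fin (2 * n))).ExteriorAlgebra S) := by
  rw [brkt_eq_antisymmetrization, ExteriorAlgebra.basis_apply]
  exact congrArg _ (congrArg _ (funext fun _ => (Pi.basisFun_apply ℚ _ _).symm))

theorem Omega_eq_range : Omega n = LinearMap.range (antisymmetrization (σLin n)) := by
  apply le_antisymm
  · refine Submodule.span_le.2 ?_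
    rintro _ ⟨p, a, rfl⟩
    exact ⟨_, (brkt_eq_antisymmetrization n a).symm⟩
  · rw [LinearMap.range_eq_map, ← (Pi.basisFun ℚ (Fin (2 * n))).ExteriorAlgebra.span_eq,
      Submodule.map_span_le]
    rintro _ ⟨S, rfl⟩
    exact Submodule.subset_span ⟨_, _, (brkt_orderEmbOfFin n S).symm⟩

end Osp

/-- The family of elements `[a₁ … a_p]` indexed by strictly increasing tuples
`a₁ < … < a_p` (equivalently, by subsets `S ⊆ {1,…,2n}`, via their increasing enumeration,
the empty set giving `1`) is linearly independent, spans `Ω`, and `dim_ℚ Ω = 2^{2n}`. -/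
theorem stmt17 (n : ℕ) (hn : 1 ≤ n) :
    LinearIndependent ℚ (fun S : Finset (Fin (2*n)) =>
      brkt n S.card (fun i => S.orderEmbOfFin rfl i)) ∧
    Submodule.span ℚ (Set.range (fun S : Finset (Fin (2*n)) =>
      brkt n S.card (fun i => S.orderEmbOfFin rfl i))) = Omega n ∧
    Module.finrank ℚ (Omega n) = 2^(2*n) := by
  let b := (Pi.basisFun ℚ (Fin (2*n))).ExteriorAlgebra
  have hindep : LinearIndependent ℚ (antisymmetrization (σLin n) ∘ b) :=
    b.linearIndependent.map' _ (LinearMap.ker_eq_bot.2 (antisymmetrization_σLin_injective n))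
  have hspan : Submodule.span ℚ (Set.range (antisymmetrization (σLin n) ∘ b)) = Omega n := by
    rw [Set.range_comp, ← Submodule.map_span, b.span_eq, ← LinearMap.range_eq_map, Omega_eq_range]
  simp only [brkt_orderEmbOfFin]
  refine ⟨hindep, hspan, ?_⟩
  rw [← hspan, finrank_span_eq_card hindep, Fintype.card_finset, Fintype.card_fin]

end
end

section
/- For d ≥ 0, let B_d ⊆ U_n be the ℚ-linear span of all products of at most d bosonic generators σ_{ab} := σ_a σ_b + σ_b σ_a, and let V_d ⊆ U_n be the ℚ-linear span of all products b·ω with b ∈ B_d and ω ∈ Ω. Then V_d is stable under the nonstandard action: (i) σ_{bc} x − x σ_{bc} ∈ V_d for all 1 ≤ b, c ≤ 2n and all x ∈ V_d; (ii) for every 1 ≤ a ≤ 2n and every x ∈ V_d lying in the span of elements b·[a_1 … a_p] with b ∈ B_d and p even (resp. p odd), one has σ_a x + x σ_a ∈ V_d (resp. σ_a x − x σ_a ∈ V_d). (Hence U(osp(1|2n)) splits into finite dimensional modules under the nonstandard action.) -/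
open scoped BigOperators TensorProduct
open Nat

noncomputable section

/-- `B_d`, the span of all products of at most `d` bosonic generators `σ_{ab}`. -/
def Bfil (n d : ℕ) : Submodule ℚ (U n) :=
  Submodule.span ℚ {x | ∃ l : List (Fin (2*n) × Fin (2*n)),
    l.length ≤ d ∧ x = (l.map fun q => σσ n q.1 q.2).prod}

/-- `V_d`, the span of all products `b·ω` with `b ∈ B_d` and `ω ∈ Ω`. -/
def Vfil (n d : ℕ) : Submodule ℚ (U n) :=
  Submodule.span ℚ {x | ∃ b ∈ Bfil n d, ∃ w ∈ Omega n, x = b * w}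

/-- The span of all products `b·[a₁ … a_p]` with `b ∈ B_d` and `p ≡ r (mod 2)`. -/
def VfilPar (n d r : ℕ) : Submodule ℚ (U n) :=
  Submodule.span ℚ {x | ∃ b ∈ Bfil n d, ∃ p, p % 2 = r ∧
    ∃ a : Fin p → Fin (2*n), x = b * brkt n p a}

/-!
Tensoring with an exterior algebra turns antisymmetrized products into powers: if
`X = ∑ vᵢ ⊗ xᵢ` with anticommuting `vᵢ`, then `X ^ p = v₁ ⋯ v_p ⊗ [x₁ … x_p]`. Let
`z = u ⊗ s(a₀)` be one more term of this kind. The defining relations of `osp(1|2n)` say that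
`[[z, X], X] = Γ z + c X`, where `Γ` and `c` are even exterior coefficients, hence commute with `X`.

The part of `(X + z) ^ (p + 1)` linear in `z` is `∑ Xⁱ z Xʲ` over `i + j = p`, that is,
`h_p(L, R) z`, where `L` and `R` multiply by `X` on the left and on the right and `h_p` is the
complete homogeneous symmetric polynomial; so it stays in the span of antisymmetrized products.
Up to `c X`, which contributes only powers of `X`, `(R - L) ^ 2` acts on `z` as the scalar `Γ`, and
every symmetric polynomial in `L` and `R` is a polynomial in `L + R` and `(R - L) ^ 2`. By induction
on the degree, first `(L + R) ^ p z`, then `X ^ p z + z X ^ p` stays in that span. This is the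
nonstandard action of `s(a₀)` on `[a₁ … a_p]`, the sign coming from moving `u` past the `vᵢ`. The
product `s(a₀) [a₁ … a_p]` itself needs the difference `X ^ p z - z X ^ p` as well, and this costs
one anticommutator of generators. The factor in `B_d` is absorbed by the Leibniz rule.
-/

section CommutingOperators

/-- The complete homogeneous symmetric polynomial of degree `n` in two variables. -/
def completeHomog {A : Type*} [Semiring A] (x y : A) (n : ℕ) : A :=
  ∑ ij ∈ Finset.HasAntidiagonal.antidiagonal n, x ^ ij.1 * y ^ ij.2

lemma completeHomog_zero {A : Type*} [Semiring A] (x y : A) : completeHomog x y 0 = 1 := by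
  simp [completeHomog]

lemma completeHomog_succ {A : Type*} [Semiring A] (x y : A) (n : ℕ) :
    completeHomog x y (n + 1) = y ^ (n + 1) + x * completeHomog x y n := by
  simp [completeHomog, Finset.Nat.antidiagonal_succ, Finset.mul_sum, _root_.pow_succ', mul_assoc]

variable {A : Type*} [CommRing A]

lemma completeHomog_comm (x y : A) (n : ℕ) : completeHomog x y n = completeHomog y x n := by
  rw [completeHomog, ← Finset.Nat.sum_antidiagonal_swap]
  simp only [Prod.fst_swap, Prod.snd_swap, mul_comm, completeHomog]

lemma four_mul_completeHomog_add_two (x y : A) (n : ℕ) :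
    4 * completeHomog x y (n + 2) =
      4 * ((x + y) * completeHomog x y (n + 1)) - (x + y) ^ 2 * completeHomog x y n
        + (y - x) ^ 2 * completeHomog x y n := by
  linear_combination 4 * completeHomog_succ x y (n + 1) - 4 * y * completeHomog_succ x y n

lemma pow_succ_add_pow_succ_eq_completeHomog (x y : A) (n : ℕ) :
    x ^ (n + 1) + y ^ (n + 1) = 2 * completeHomog x y (n + 1) - (x + y) * completeHomog x y n := by
  have h := completeHomog_succ y x n
  rw [← completeHomog_comm x y, ← completeHomog_comm x y] at h
  linear_combination -h - completeHomog_succ x y n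

section Ring

variable {K E : Type*} [Ring K] [AddCommGroup E] [Module K E] [Module A E]
  {W : Submodule K E} {l r γ : A} {y z : E}

lemma pow_mul_pow_smul_mem (hlr : l • y = r • y) (hy : ∀ n, r ^ n • y ∈ W) (a b : ℕ) :
    (l ^ a * r ^ b) • y ∈ W := by
  induction a generalizing b with
  | zero => simpa using hy b
  | succ a ih =>
    have h : (l ^ (a + 1) * r ^ b) • y = (l ^ a * r ^ (b + 1)) • y := by
      rw [show l ^ (a + 1) * r ^ b = l ^ a * r ^ b * l by ring, mul_smul, hlr, smul_smul, mul_assoc,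
        ← _root_.pow_succ]
    exact h ▸ ih (b + 1)

lemma add_pow_mul_completeHomog_smul_mem (hlr : l • y = r • y) (hy : ∀ n, r ^ n • y ∈ W)
    (j n : ℕ) : ((l + r) ^ j * completeHomog l r n) • y ∈ W := by
  suffices h : ∀ a b, ((l + r) ^ j * (l ^ a * r ^ b)) • y ∈ W by
    rw [completeHomog, Finset.mul_sum, Finset.sum_smul]
    exact sum_mem fun ij _ => h _ _
  induction j with
  | zero => simpa using pow_mul_pow_smul_mem hlr hy
  | succ j ih =>
    intro a b
    convert add_mem (ih (a + 1) b) (ih a (b + 1)) using 1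
    rw [← add_smul]
    ring_nf

lemma completeHomog_smul_sub_add_pow_smul_mem (hγ : ∀ w ∈ W, γ • w ∈ W)
    (hz : (r - l) ^ 2 • z = γ • z + y) (hlr : l • y = r • y) (hy : ∀ n, r ^ n • y ∈ W) {m : ℕ}
    (ih : ∀ q < m, (l + r) ^ q • z ∈ W) (n j : ℕ) (hjn : j + n ≤ m) :
    ((2 ^ n * (l + r) ^ j * completeHomog l r n) - ((n + 1 : ℕ) : A) * (l + r) ^ (j + n)) • z
      ∈ W := by
  induction n using Nat.twoStepInduction generalizing j with
  | zero => simp [completeHomog_zero]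
  | one =>
    convert W.zero_mem
    convert zero_smul A z
    simp [completeHomog_succ, completeHomog_zero]
    ring
  | more n ih₀ ih₁ =>
    have hlower : (2 ^ n * (l + r) ^ j * completeHomog l r n) • z ∈ W := by
      have h := add_mem (ih₀ j (by omega)) (nsmul_mem (ih (j + n) (by omega)) (n + 1))
      rwa [← Nat.cast_smul_eq_nsmul A, smul_smul, ← add_smul, sub_add_cancel] at h
    have hD : (2 ^ n * (l + r) ^ j * completeHomog l r n * (r - l) ^ 2) • z ∈ W := by
      rw [mul_smul, hz, smul_add, smul_comm]
      refine add_mem (hγ _ hlower) ?_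
      rw [mul_assoc, mul_smul]
      have h := nsmul_mem (add_pow_mul_completeHomog_smul_mem hlr hy j n) (2 ^ n)
      rwa [← Nat.cast_smul_eq_nsmul A, Nat.cast_pow] at h
    convert sub_mem (add_mem (nsmul_mem (ih₁ (j + 1) (by omega)) 2) hD) (ih₀ (j + 2) (by omega))
      using 1
    rw [two_nsmul, ← add_smul, ← add_smul, ← sub_smul]
    congr 1
    push_cast
    linear_combination 2 ^ n * (l + r) ^ j * four_mul_completeHomog_add_two l r n

lemma pow_mul_sub_pow_smul_mem (hγ : ∀ w ∈ W, γ • w ∈ W) (hz : (r - l) ^ 2 • z = γ • z + y)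
    (hlr : l • y = r • y) (hy : ∀ n, r ^ n • y ∈ W) {p : ℕ} (hp : r ^ p • z ∈ W)
    (hD : r ^ p • (r - l) • z ∈ W) (b : ℕ) : (r ^ p * (r - l) ^ b) • z ∈ W := by
  have hDy : (r - l) • y = 0 := by rw [sub_smul, hlr, sub_self]
  induction b using Nat.twoStepInduction with
  | zero => simpa using hp
  | one => simpa [mul_smul] using hD
  | more b ih _ =>
    rw [_root_.pow_add, ← mul_assoc, mul_smul, hz, smul_add, smul_comm]
    refine add_mem (hγ _ ih) ?_
    cases b with
    | zero => simpa using hy p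
    | succ b => simp [_root_.pow_succ, mul_smul, hDy]

end Ring

variable {K E : Type*} [Field K] [CharZero K] [AddCommGroup E] [Module K E] [Module A E]
  {W : Submodule K E} {l r γ : A} {y z : E}

lemma mem_of_natCast_smul_mem {k : ℕ} (hk : k ≠ 0) {x : E} (h : (k : A) • x ∈ W) : x ∈ W := by
  rw [Nat.cast_smul_eq_nsmul, ← Nat.cast_smul_eq_nsmul K] at h
  exact (W.smul_mem_iff (Nat.cast_ne_zero.2 hk)).1 h

lemma add_pow_smul_mem (hγ : ∀ w ∈ W, γ • w ∈ W) (hz : (r - l) ^ 2 • z = γ • z + y)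
    (hlr : l • y = r • y) (hy : ∀ n, r ^ n • y ∈ W) (hh : ∀ n, completeHomog l r n • z ∈ W)
    (m : ℕ) : (l + r) ^ m • z ∈ W := by
  induction m using Nat.strong_induction_on with
  | _ m ih =>
    have h := completeHomog_smul_sub_add_pow_smul_mem hγ hz hlr hy ih m 0 (zero_add m).le
    rw [_root_.pow_zero, mul_one, zero_add, sub_smul, mul_smul, mul_smul] at h
    have h2 : (2 ^ m : A) • completeHomog l r m • z ∈ W := by
      have h := nsmul_mem (hh m) (2 ^ m)
      rwa [← Nat.cast_smul_eq_nsmul A, Nat.cast_pow] at h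
    exact mem_of_natCast_smul_mem m.succ_ne_zero ((W.sub_mem_iff_right h2).1 h)

theorem pow_add_pow_smul_mem (hγ : ∀ w ∈ W, γ • w ∈ W) (hz : (r - l) ^ 2 • z = γ • z + y)
    (hlr : l • y = r • y) (hy : ∀ n, r ^ n • y ∈ W) (hh : ∀ n, completeHomog l r n • z ∈ W)
    (n : ℕ) : (l ^ n + r ^ n) • z ∈ W := by
  cases n with
  | zero => simpa [add_smul, completeHomog_zero] using add_mem (hh 0) (hh 0)
  | succ n =>
    have hT (q : ℕ) : (l + r) ^ q • z ∈ W := add_pow_smul_mem hγ hz hlr hy hh q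
    have h := add_mem (completeHomog_smul_sub_add_pow_smul_mem hγ hz hlr hy (m := n + 1)
      (fun q _ => hT q) n 1 (by omega)) (nsmul_mem (hT (1 + n)) (n + 1))
    rw [← Nat.cast_smul_eq_nsmul A, smul_smul, ← add_smul, sub_add_cancel, _root_.pow_one,
      mul_assoc, mul_smul, ← Nat.cast_ofNat, ← Nat.cast_pow] at h
    rw [pow_succ_add_pow_succ_eq_completeHomog, sub_smul, two_mul, add_smul]
    exact sub_mem (add_mem (hh _) (hh _)) (mem_of_natCast_smul_mem (pow_ne_zero n two_ne_zero) h)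

theorem pow_smul_mem_of_pow_add_pow_smul_mem (hγ : ∀ w ∈ W, γ • w ∈ W)
    (hz : (r - l) ^ 2 • z = γ • z + y) (hlr : l • y = r • y) (hy : ∀ n, r ^ n • y ∈ W)
    (hD : ∀ n, r ^ n • (r - l) • z ∈ W) (hS : ∀ n, (l ^ n + r ^ n) • z ∈ W) (p : ℕ) :
    r ^ p • z ∈ W := by
  induction p using Nat.strong_induction_on with
  | _ p ih =>
    have hdiff : (l ^ p - r ^ p) • z ∈ W := by
      rw [show l ^ p = (r + -(r - l)) ^ p by congr 1; ring, add_pow, Finset.sum_range_succ,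
        Nat.sub_self, _root_.pow_zero, mul_one, Nat.choose_self, Nat.cast_one, mul_one,
        add_sub_cancel_right, Finset.sum_smul]
      refine sum_mem fun a ha => ?_
      have h := zsmul_mem (pow_mul_sub_pow_smul_mem hγ hz hlr hy (ih a (Finset.mem_range.1 ha))
        (hD a) (p - a)) ((-1) ^ (p - a) * p.choose a)
      rw [← Int.cast_smul_eq_zsmul A, smul_smul] at h
      convert h using 2
      rw [neg_pow]
      push_cast
      ring
    have h := sub_mem (hS p) hdiff
    rw [← sub_smul, add_sub_sub_cancel, ← two_mul, mul_smul, ← Nat.cast_ofNat] at h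
    exact mem_of_natCast_smul_mem two_ne_zero h

end CommutingOperators

lemma lie_mul {A : Type*} [Ring A] (t x y : A) : ⁅t, x * y⁆ = ⁅t, x⁆ * y + x * ⁅t, y⁆ := by
  simp only [Ring.lie_def]
  noncomm_ring

lemma lie_mul_add_mul_swap {A : Type*} [Ring A] (t x y : A) :
    ⁅t, x * y + y * x⁆ = ⁅t, x⁆ * y + x * ⁅t, y⁆ + (⁅t, y⁆ * x + y * ⁅t, x⁆) := by
  rw [← lie_mul, ← lie_mul, Ring.lie_def, Ring.lie_def, Ring.lie_def, mul_add, add_mul,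
    add_sub_add_comm]

section CommutingMultiplications

open scoped IsMulCommutative

section CommRing

variable {K A : Type*} [CommRing K] [Ring A] [Algebra K A]

lemma exists_isMulCommutative_mulLeft_mulRight {X Γ : A} (h : Commute Γ X) :
    ∃ S : Subalgebra K (Module.End K A), IsMulCommutative S ∧ LinearMap.mulLeft K X ∈ S ∧
      LinearMap.mulRight K X ∈ S ∧ LinearMap.mulLeft K Γ ∈ S := by
  have hXX : Commute (LinearMap.mulLeft K X) (LinearMap.mulRight K X) :=
    LinearMap.commute_mulLeft_right X X
  have hΓX : Commute (LinearMap.mulLeft K Γ) (LinearMap.mulLeft K X) :=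
    LinearMap.ext fun x => by simp [← mul_assoc, h.eq]
  have hΓX' : Commute (LinearMap.mulLeft K Γ) (LinearMap.mulRight K X) :=
    LinearMap.commute_mulLeft_right Γ X
  refine ⟨Algebra.adjoin K {LinearMap.mulLeft K X, LinearMap.mulRight K X, LinearMap.mulLeft K Γ},
    Algebra.isMulCommutative_adjoin K ?_, Algebra.subset_adjoin (by simp),
    Algebra.subset_adjoin (by simp), Algebra.subset_adjoin (by simp)⟩
  rintro f (rfl | rfl | rfl) g (rfl | rfl | rfl)
  exacts [rfl, hXX, hΓX.symm, hXX.symm, rfl, hΓX'.symm, hΓX, hΓX', rfl]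

lemma mulLeft_pow_smul {S : Subalgebra K (Module.End K A)} {X : A}
    (hX : LinearMap.mulLeft K X ∈ S) (n : ℕ) (x : A) :
    (⟨LinearMap.mulLeft K X, hX⟩ : S) ^ n • x = X ^ n * x := by
  simp [Subalgebra.smul_def]

lemma mulRight_pow_smul {S : Subalgebra K (Module.End K A)} {X : A}
    (hX : LinearMap.mulRight K X ∈ S) (n : ℕ) (x : A) :
    (⟨LinearMap.mulRight K X, hX⟩ : S) ^ n • x = x * X ^ n := by
  simp [Subalgebra.smul_def]

lemma mulRight_sub_mulLeft_smul {S : Subalgebra K (Module.End K A)} {X : A}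
    (hl : LinearMap.mulLeft K X ∈ S) (hr : LinearMap.mulRight K X ∈ S) (x : A) :
    ((⟨LinearMap.mulRight K X, hr⟩ : S) - ⟨LinearMap.mulLeft K X, hl⟩) • x = ⁅x, X⁆ := by
  simp [Subalgebra.smul_def, Ring.lie_def]

end CommRing

variable {K A : Type*} [Field K] [CharZero K] [Ring A] [Algebra K A] {W : Submodule K A}
  {X Γ y z : A}

theorem pow_mul_add_mul_pow_mem (hΓX : Commute Γ X)
    (hyX : Commute X y) (hΓ : ∀ w ∈ W, Γ * w ∈ W) (hz : ⁅⁅z, X⁆, X⁆ = Γ * z + y)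
    (hy : ∀ n, y * X ^ n ∈ W)
    (hh : ∀ n, ∑ ij ∈ Finset.HasAntidiagonal.antidiagonal n, X ^ ij.1 * (z * X ^ ij.2) ∈ W)
    (n : ℕ) :
    X ^ n * z + z * X ^ n ∈ W := by
  obtain ⟨S, hS, hl, hr, hγ⟩ := exists_isMulCommutative_mulLeft_mulRight (K := K) hΓX
  have h := pow_add_pow_smul_mem (A := S) (l := ⟨_, hl⟩) (r := ⟨_, hr⟩) (γ := ⟨_, hγ⟩) (y := y)
    (z := z) hΓ ?_ hyX.eq ?_ ?_ n
  · rwa [add_smul, mulLeft_pow_smul, mulRight_pow_smul] at h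
  · rw [_root_.pow_two, mul_smul, mulRight_sub_mulLeft_smul, mulRight_sub_mulLeft_smul, hz]
    rfl
  · simpa only [mulRight_pow_smul] using hy
  · simpa only [completeHomog, Finset.sum_smul, mul_smul, mulLeft_pow_smul, mulRight_pow_smul]
      using hh

theorem mul_pow_mem_of_pow_mul_add_mul_pow_mem (hΓX : Commute Γ X)
    (hyX : Commute X y) (hΓ : ∀ w ∈ W, Γ * w ∈ W) (hz : ⁅⁅z, X⁆, X⁆ = Γ * z + y)
    (hy : ∀ n, y * X ^ n ∈ W) (hD : ∀ n, ⁅z, X⁆ * X ^ n ∈ W)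
    (hS : ∀ n, X ^ n * z + z * X ^ n ∈ W) (n : ℕ) : z * X ^ n ∈ W := by
  obtain ⟨S, hS', hl, hr, hγ⟩ := exists_isMulCommutative_mulLeft_mulRight (K := K) hΓX
  have h := pow_smul_mem_of_pow_add_pow_smul_mem (A := S) (l := ⟨_, hl⟩) (r := ⟨_, hr⟩)
    (γ := ⟨_, hγ⟩) (y := y) (z := z) hΓ ?_ hyX.eq ?_ ?_ ?_ n
  · rwa [mulRight_pow_smul] at h
  · rw [_root_.pow_two, mul_smul, mulRight_sub_mulLeft_smul, mulRight_sub_mulLeft_smul, hz]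
    rfl
  · simpa only [mulRight_pow_smul] using hy
  · simpa only [mulRight_pow_smul, mulRight_sub_mulLeft_smul] using hD
  · simpa only [add_smul, mulLeft_pow_smul, mulRight_pow_smul] using hS

end CommutingMultiplications

section Antisymmetrization

variable (K : Type*) {B : Type*} [CommRing K] [Ring B] [Algebra K B]

/-- The antisymmetrized product `∑ sign(s) x_{s(1)} ⋯ x_{s(p)}` of a tuple, as an alternating map;
it is not divided by `p!`. -/
def antisymProd (p : ℕ) : B [⋀^Fin p]→ₗ[K] B :=
  (MultilinearMap.mkPiAlgebraFin K p B).alternatization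

lemma antisymProd_apply {p : ℕ} (x : Fin p → B) :
    antisymProd K p x =
      ∑ s : Equiv.Perm (Fin p), (Equiv.Perm.sign s : ℤ) • (List.ofFn fun i => x (s i)).prod := by
  simp [antisymProd, MultilinearMap.alternatization_apply, Units.smul_def]

lemma lie_prod_ofFn (t : B) {p : ℕ} (x : Fin p → B) :
    ⁅t, (List.ofFn x).prod⁆ = ∑ j, (List.ofFn (Function.update x j ⁅t, x j⁆)).prod := by
  induction p with
  | zero => simp [Ring.lie_def]
  | succ p ih =>
    have tail_update (j : Fin p) (b : B) : (fun i : Fin p => Function.update x j.succ b i.succ) =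
        Function.update (fun i : Fin p => x i.succ) j b :=
      Function.update_comp_eq_of_injective x (Fin.succ_injective p) j b
    simp only [Fin.sum_univ_succ, List.ofFn_succ, List.prod_cons, Function.update_self, tail_update,
      ne_eq, Fin.succ_ne_zero, not_false_eq_true, Function.update_of_ne, (Fin.succ_ne_zero _).symm]
    rw [← Finset.mul_sum, ← ih, lie_mul]

lemma lie_antisymProd (t : B) {p : ℕ} (x : Fin p → B) :
    ⁅t, antisymProd K p x⁆ = ∑ j, antisymProd K p (Function.update x j ⁅t, x j⁆) := by
  simp only [antisymProd_apply]
  rw [Finset.sum_comm, Ring.lie_def, Finset.mul_sum, Finset.sum_mul, ← Finset.sum_sub_distrib]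
  refine Finset.sum_congr rfl fun s _ => ?_
  rw [mul_smul_comm, smul_mul_assoc, ← smul_sub, ← Ring.lie_def, lie_prod_ofFn, ← Finset.smul_sum]
  congr 1
  refine (Finset.sum_congr rfl fun j _ => ?_).trans (Equiv.sum_comp s _)
  exact congrArg (fun y => (List.ofFn y).prod)
    (Function.update_comp_eq_of_injective x s.injective j _).symm

end Antisymmetrization

section GrassmannEnvelope

open ExteriorAlgebra

section CommRing

variable (K : Type*) {V B κ : Type*} [CommRing K] [AddCommGroup V] [Module K V] [Ring B]
  [Algebra K B] [Fintype κ]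

/-- The element `∑ vᵢ ⊗ xᵢ` of `Λ(V) ⊗ B`: its coefficients `vᵢ` anticommute, so that its powers
record the antisymmetrized products of the `xᵢ`. -/
def grassmannSum (v : κ → V) (x : κ → B) : ExteriorAlgebra K V ⊗[K] B :=
  ∑ i, ι K (v i) ⊗ₜ[K] x i

variable {K}

lemma grassmannSum_option (v : Option κ → V) (x : Option κ → B) :
    grassmannSum K v x =
      ι K (v none) ⊗ₜ[K] x none + grassmannSum K (v ∘ Option.some) (x ∘ Option.some) :=
  Fintype.sum_option _

lemma prod_ofFn_tmul {C : Type*} [Ring C] [Algebra K C] {p : ℕ} (c : Fin p → C) (x : Fin p → B) :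
    (List.ofFn fun i => c i ⊗ₜ[K] x i).prod = (List.ofFn c).prod ⊗ₜ[K] (List.ofFn x).prod := by
  induction p with
  | zero => simp [Algebra.TensorProduct.one_def]
  | succ p ih => simp [List.ofFn_succ, ih]

lemma grassmannSum_pow (v : κ → V) (x : κ → B) (p : ℕ) :
    grassmannSum K v x ^ p =
      ∑ f : Fin p → κ, ιMulti K p (v ∘ f) ⊗ₜ[K] (List.ofFn (x ∘ f)).prod := by
  classical
  have h := (MultilinearMap.mkPiAlgebraFin K p (ExteriorAlgebra K V ⊗[K] B)).map_sum
    (fun (_ : Fin p) (i : κ) => ι K (v i) ⊗ₜ[K] x i)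
  simp only [MultilinearMap.mkPiAlgebraFin_apply, prod_ofFn_tmul, List.ofFn_const,
    List.prod_replicate] at h
  exact h

lemma ιMulti_comp_perm_tmul {p : ℕ} (v : Fin p → V) (s : Equiv.Perm (Fin p)) (b : B) :
    ιMulti K p (v ∘ s) ⊗ₜ[K] b = ιMulti K p v ⊗ₜ[K] ((Equiv.Perm.sign s : ℤ) • b) := by
  rw [(ιMulti K p).map_perm v s, Units.smul_def, TensorProduct.smul_tmul]

lemma grassmannSum_pow_eq_tmul_antisymProd {p : ℕ} (v : Fin p → V) (x : Fin p → B) :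
    grassmannSum K v x ^ p = ιMulti K p v ⊗ₜ[K] antisymProd K p x := by
  rw [grassmannSum_pow, antisymProd_apply, TensorProduct.tmul_sum]
  refine (Fintype.sum_of_injective (fun (s : Equiv.Perm (Fin p)) => (s : Fin p → Fin p))
    DFunLike.coe_injective _ _ ?_ fun s => (ιMulti_comp_perm_tmul v s _).symm).symm
  intro f hf
  have hinj : ¬ Function.Injective (v ∘ f) := fun h => hf
    ⟨Equiv.ofBijective f (Finite.injective_iff_bijective.1 h.of_comp), rfl⟩
  rw [ιMulti_eq_zero_of_not_inj hinj, TensorProduct.zero_tmul]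

lemma factorial_nsmul_grassmannSum_pow (v : κ → V) (x : κ → B) (p : ℕ) :
    p ! • grassmannSum K v x ^ p =
      ∑ f : Fin p → κ, ιMulti K p (v ∘ f) ⊗ₜ[K] antisymProd K p (x ∘ f) := by
  have hperm (s : Equiv.Perm (Fin p)) : grassmannSum K v x ^ p =
      ∑ f : Fin p → κ, ιMulti K p (v ∘ f) ⊗ₜ[K]
        ((Equiv.Perm.sign s : ℤ) • (List.ofFn fun i => (x ∘ f) (s i)).prod) := by
    rw [grassmannSum_pow, ← Equiv.sum_comp (Equiv.arrowCongr s.symm (Equiv.refl κ))]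
    exact Finset.sum_congr rfl fun f _ => ιMulti_comp_perm_tmul (v ∘ f) s _
  calc p ! • grassmannSum K v x ^ p
      = ∑ _s : Equiv.Perm (Fin p), grassmannSum K v x ^ p := by
        rw [Finset.sum_const, Finset.card_univ, Fintype.card_perm, Fintype.card_fin]
    _ = _ := by
        rw [Finset.sum_congr rfl fun s _ => hperm s, Finset.sum_comm]
        simp only [antisymProd_apply, TensorProduct.tmul_sum]

lemma tmul_mul_mem_baseChange {W W' : Submodule K B} {b : B} (hb : ∀ w ∈ W, b * w ∈ W')
    (c : ExteriorAlgebra K V) {y : ExteriorAlgebra K V ⊗[K] B}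
    (hy : y ∈ W.baseChange (ExteriorAlgebra K V)) :
    (c ⊗ₜ[K] b) * y ∈ W'.baseChange (ExteriorAlgebra K V) := by
  obtain ⟨t, rfl⟩ := hy
  induction t with
  | zero => simp
  | tmul d w =>
    rw [LinearMap.baseChange_tmul, Algebra.TensorProduct.tmul_mul_tmul]
    exact Submodule.tmul_mem_baseChange_of_mem _ (hb w w.2)
  | add t t' ht ht' =>
    rw [map_add, mul_add]
    exact add_mem ht ht'

lemma tmul_one_mul_mem_baseChange {W : Submodule K B} (c : ExteriorAlgebra K V)
    {y : ExteriorAlgebra K V ⊗[K] B} (hy : y ∈ W.baseChange (ExteriorAlgebra K V)) :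
    (c ⊗ₜ[K] 1) * y ∈ W.baseChange (ExteriorAlgebra K V) :=
  tmul_mul_mem_baseChange (fun w hw => by rwa [one_mul]) c hy

lemma ι_mul_ι_swap_s18 (u v : V) : ι K u * ι K v = -(ι K v * ι K u) :=
  eq_neg_of_add_eq_zero_left (ι_add_mul_swap u v)

lemma ιMulti_mul_ι {p : ℕ} (v : Fin p → V) (u : V) :
    ιMulti K p v * ι K u = (-1 : K) ^ p • (ι K u * ιMulti K p v) := by
  induction p with
  | zero => simp
  | succ p ih =>
    rw [ιMulti_succ_apply, mul_assoc, ih, mul_smul_comm, ← mul_assoc (ι K (v 0)), ι_mul_ι_swap_s18,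
      neg_mul, _root_.pow_succ, mul_neg_one, neg_smul, smul_neg, mul_assoc]

lemma ιMulti_basis_ne_zero [Nontrivial K] {p : ℕ} (b : Module.Basis (Fin p) K V) :
    ιMulti K p b ≠ 0 := by
  intro h
  have := congrArg (liftAlternating (R := K) (Function.update 0 p b.det)) h
  rw [liftAlternating_apply_ιMulti, Function.update_self, b.det_self, map_zero] at this
  exact one_ne_zero this

lemma ι_mul_ιMulti_basis_ne_zero [Nontrivial K] {p : ℕ} (b : Module.Basis (Fin (p + 1)) K V) :
    ι K (b 0) * ιMulti K p (fun i => b i.succ) ≠ 0 := by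
  have h := ιMulti_basis_ne_zero b
  rwa [ιMulti_succ_apply] at h

lemma tmul_mul_grassmannSum_pow_mul_tmul (u : V) (b : B) (v : κ → V) (x : κ → B) (k : ℕ) :
    (ι K u ⊗ₜ[K] b) * (grassmannSum K v x ^ k * (ι K u ⊗ₜ[K] b)) = 0 := by
  simp only [grassmannSum_pow, Finset.sum_mul, Finset.mul_sum,
    Algebra.TensorProduct.tmul_mul_tmul, ιMulti_mul_ι]
  refine Finset.sum_eq_zero fun f _ => ?_
  rw [mul_smul_comm, ← mul_assoc, ι_sq_zero, zero_mul, smul_zero, TensorProduct.zero_tmul]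

lemma add_pow_succ_of_mul_pow_mul_eq_zero {A : Type*} [Ring A] {X z : A}
    (h : ∀ k, z * (X ^ k * z) = 0) (n : ℕ) :
    (X + z) ^ (n + 1) = X ^ (n + 1) +
      ∑ ij ∈ Finset.HasAntidiagonal.antidiagonal n, X ^ ij.1 * (z * X ^ ij.2) := by
  induction n with
  | zero => simp
  | succ n ih =>
    have hz : z * ∑ ij ∈ Finset.HasAntidiagonal.antidiagonal n, X ^ ij.1 * (z * X ^ ij.2) = 0 := by
      rw [Finset.mul_sum]
      refine Finset.sum_eq_zero fun ij _ => ?_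
      rw [← mul_assoc (X ^ _), ← mul_assoc, h, zero_mul]
    rw [_root_.pow_succ', ih, mul_add, add_mul, add_mul, hz, add_zero,
      Finset.Nat.antidiagonal_succ, Finset.sum_cons, Finset.sum_map, Finset.mul_sum,
      _root_.pow_succ' X (n + 1)]
    simp [_root_.pow_succ', mul_assoc, add_assoc]

lemma commute_ι_mul_ι_s18 (u v w : V) : Commute (ι K u * ι K v) (ι K w) := by
  rw [commute_iff_eq, mul_assoc, ι_mul_ι_swap_s18 v w, mul_neg, ← mul_assoc, ι_mul_ι_swap_s18 u w, neg_mul,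
    neg_neg, mul_assoc]

lemma commute_tmul_one_grassmannSum {c : ExteriorAlgebra K V} (hc : ∀ w, Commute c (ι K w))
    (v : κ → V) (x : κ → B) : Commute (c ⊗ₜ[K] (1 : B)) (grassmannSum K v x) :=
  Commute.sum_right _ _ _ fun i _ => by
    rw [commute_iff_eq, Algebra.TensorProduct.tmul_mul_tmul, Algebra.TensorProduct.tmul_mul_tmul,
      (hc (v i)).eq, one_mul, mul_one]

lemma lie_ι_tmul_grassmannSum (u : V) (b : B) (v : κ → V) (x : κ → B) :
    ⁅ι K u ⊗ₜ[K] b, grassmannSum K v x⁆ = ∑ i, (ι K u * ι K (v i)) ⊗ₜ[K] (b * x i + x i * b) := by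
  rw [Ring.lie_def, grassmannSum, Finset.mul_sum, Finset.sum_mul, ← Finset.sum_sub_distrib]
  refine Finset.sum_congr rfl fun i _ => ?_
  rw [Algebra.TensorProduct.tmul_mul_tmul, Algebra.TensorProduct.tmul_mul_tmul,
    ι_mul_ι_swap_s18 (v i) u, TensorProduct.neg_tmul, sub_neg_eq_add, TensorProduct.tmul_add]

lemma lie_tmul_grassmannSum {c : ExteriorAlgebra K V} (hc : ∀ w, Commute c (ι K w)) (b : B)
    (v : κ → V) (x : κ → B) :
    ⁅c ⊗ₜ[K] b, grassmannSum K v x⁆ = ∑ i, (c * ι K (v i)) ⊗ₜ[K] ⁅b, x i⁆ := by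
  rw [Ring.lie_def, grassmannSum, Finset.mul_sum, Finset.sum_mul, ← Finset.sum_sub_distrib]
  refine Finset.sum_congr rfl fun i _ => ?_
  rw [Algebra.TensorProduct.tmul_mul_tmul, Algebra.TensorProduct.tmul_mul_tmul,
    ← (hc (v i)).eq, ← TensorProduct.tmul_sub, Ring.lie_def]

end CommRing

variable {K V B κ : Type*} [Field K] [AddCommGroup V] [Module K V] [Ring B] [Algebra K B]
  [Fintype κ]

lemma mem_of_tmul_mem_baseChange {C : Type*} [Ring C] [Algebra K C] {W : Submodule K B} {c : C}
    (hc : c ≠ 0) {b : B} (h : c ⊗ₜ[K] b ∈ W.baseChange C) : b ∈ W := by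
  obtain ⟨ψ, hψ⟩ := Module.Projective.exists_dual_eq_one K hc
  let ev : C ⊗[K] B →ₗ[K] B := TensorProduct.lid K B ∘ₗ ψ.rTensor B
  have hev (t : C ⊗[K] W) : ev (W.subtype.baseChange C t) ∈ W := by
    induction t with
    | zero => simp
    | tmul d w => simpa [ev] using W.smul_mem _ w.2
    | add t t' ht ht' =>
      rw [map_add, map_add]
      exact add_mem ht ht'
  obtain ⟨t, ht⟩ := h
  have hb : ev (c ⊗ₜ[K] b) = b := by simp [ev, hψ]
  exact hb ▸ ht ▸ hev t

variable [CharZero K] {W : Submodule K B}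

lemma grassmannSum_pow_mem_baseChange (v : κ → V) (x : κ → B)
    (p : ℕ) (hW : ∀ f : Fin p → κ, antisymProd K p (x ∘ f) ∈ W) :
    grassmannSum K v x ^ p ∈ W.baseChange (ExteriorAlgebra K V) := by
  rw [← Submodule.restrictScalars_mem K,
    ← Submodule.smul_mem_iff _ (Nat.cast_ne_zero.2 p.factorial_ne_zero : (p ! : K) ≠ 0),
    Nat.cast_smul_eq_nsmul, factorial_nsmul_grassmannSum_pow]
  exact sum_mem fun f _ => Submodule.tmul_mem_baseChange_of_mem _ (hW f)

lemma sum_pow_mul_tmul_mul_pow_mem_baseChange (v : Option κ → V)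
    (x : Option κ → B) (hW : ∀ p (f : Fin p → Option κ), antisymProd K p (x ∘ f) ∈ W) (n : ℕ) :
    ∑ ij ∈ Finset.HasAntidiagonal.antidiagonal n,
      grassmannSum K (v ∘ Option.some) (x ∘ Option.some) ^ ij.1 *
        ((ι K (v none) ⊗ₜ[K] x none) *
          grassmannSum K (v ∘ Option.some) (x ∘ Option.some) ^ ij.2) ∈
      W.baseChange (ExteriorAlgebra K V) := by
  have h := sub_mem (grassmannSum_pow_mem_baseChange v x (n + 1) (hW _))
    (grassmannSum_pow_mem_baseChange (v ∘ Option.some) (x ∘ Option.some) (n + 1)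
      fun f => hW _ (Option.some ∘ f))
  rwa [grassmannSum_option, add_comm (ι K (v none) ⊗ₜ[K] x none),
    add_pow_succ_of_mul_pow_mul_eq_zero (tmul_mul_grassmannSum_pow_mul_tmul _ _ _ _),
    add_sub_cancel_left] at h

end GrassmannEnvelope

section ParabosonRelations

open ExteriorAlgebra

/-- The trilinear relations `[{s_a, s_b}, s_c] = -g_{ac} s_b - g_{bc} s_a` between the fermionic
generators of `osp(1|2n)`, for an arbitrary family and an arbitrary form `g`. -/
def ParabosonRelations {K B α : Type*} [Ring K] [Ring B] [Module K B] (g : α → α → K)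
    (s : α → B) : Prop :=
  ∀ a b c, ⁅s a * s b + s b * s a, s c⁆ = -(g a c • s b) - g b c • s a

lemma ParabosonRelations.lie_anticommutator {K B α : Type*} [CommRing K] [Ring B] [Algebra K B]
    {g : α → α → K} {s : α → B} (hs : ParabosonRelations g s) (a b c d : α) :
    ⁅s a * s b + s b * s a, s c * s d + s d * s c⁆ =
      -(g a c • (s b * s d + s d * s b)) - g b c • (s a * s d + s d * s a)
        - g a d • (s c * s b + s b * s c) - g b d • (s c * s a + s a * s c) := by
  rw [lie_mul_add_mul_swap, hs, hs]
  simp only [sub_mul, mul_sub, neg_mul, mul_neg, smul_mul_assoc, mul_smul_comm, smul_add]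
  abel

section CommRing

variable {K B V α κ : Type*} [CommRing K] [Ring B] [Algebra K B] [AddCommGroup V] [Module K V]
  [Fintype κ] {g : α → α → K} {s : α → B}

/-- The even coefficient `-∑ g(aᵢ, aⱼ) vᵢ vⱼ` through which `ad(X)²`, for `X = ∑ vᵢ ⊗ s(aᵢ)`, acts
on `u ⊗ s(a₀)`. -/
def grassmannForm (g : α → α → K) (v : κ → V) (a : κ → α) : ExteriorAlgebra K V :=
  -∑ i, ∑ j, g (a i) (a j) • (ι K (v i) * ι K (v j))

/-- The even coefficient `∑ g(a₀, aⱼ) u vⱼ`: the coefficient of `X = ∑ vᵢ ⊗ s(aᵢ)` in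
`ad(X)² (u ⊗ s(a₀))`. -/
def grassmannPairing (g : α → α → K) (u : V) (a₀ : α) (v : κ → V) (a : κ → α) :
    ExteriorAlgebra K V :=
  ∑ j, g a₀ (a j) • (ι K u * ι K (v j))

lemma commute_grassmannForm (v : κ → V) (a : κ → α) (w : V) :
    Commute (grassmannForm g v a) (ι K w) :=
  Commute.neg_left <| Commute.sum_left _ _ _ fun i _ => Commute.sum_left _ _ _ fun j _ =>
    (commute_ι_mul_ι_s18 (v i) (v j) w).smul_left _

lemma commute_grassmannPairing (u : V) (a₀ : α) (v : κ → V) (a : κ → α) (w : V) :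
    Commute (grassmannPairing g u a₀ v a) (ι K w) :=
  Commute.sum_left _ _ _ fun j _ => (commute_ι_mul_ι_s18 u (v j) w).smul_left _

lemma ι_mul_ι_mul_ι_tmul_lie (hs : ParabosonRelations g s) (u v w : V) (a b c : α) :
    (ι K u * ι K v * ι K w) ⊗ₜ[K] ⁅s a * s b + s b * s a, s c⁆ =
      -((g b c • (ι K v * ι K w) * ι K u) ⊗ₜ[K] s a) +
        (g a c • (ι K u * ι K w) * ι K v) ⊗ₜ[K] s b := by
  have hmove : ι K u * ι K v * ι K w = ι K v * ι K w * ι K u := by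
    rw [(commute_ι_mul_ι_s18 v w u).eq, mul_assoc]
  have hswap : ι K u * ι K v * ι K w = -(ι K u * ι K w * ι K v) := by
    rw [mul_assoc, ι_mul_ι_swap_s18 v, mul_neg, mul_assoc]
  calc _ = -((g b c • (ι K u * ι K v * ι K w)) ⊗ₜ[K] s a) -
        (g a c • (ι K u * ι K v * ι K w)) ⊗ₜ[K] s b := by
        rw [hs, TensorProduct.tmul_sub, TensorProduct.tmul_neg, TensorProduct.tmul_smul,
          TensorProduct.tmul_smul, TensorProduct.smul_tmul', TensorProduct.smul_tmul']
        abel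
    _ = _ := by
        nth_rw 1 [hmove]
        rw [hswap, smul_neg, TensorProduct.neg_tmul, sub_neg_eq_add, smul_mul_assoc,
          smul_mul_assoc]

lemma lie_lie_ι_tmul_grassmannSum (hs : ParabosonRelations g s) (u : V) (a₀ : α) (v : κ → V)
    (a : κ → α) :
    ⁅⁅ι K u ⊗ₜ[K] s a₀, grassmannSum K v (s ∘ a)⁆, grassmannSum K v (s ∘ a)⁆ =
      (grassmannForm g v a ⊗ₜ[K] 1) * (ι K u ⊗ₜ[K] s a₀) +
        (grassmannPairing g u a₀ v a ⊗ₜ[K] 1) * grassmannSum K v (s ∘ a) := by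
  have hsum : ⁅⁅ι K u ⊗ₜ[K] s a₀, grassmannSum K v (s ∘ a)⁆, grassmannSum K v (s ∘ a)⁆ =
      ∑ i, ∑ j, (ι K u * ι K (v i) * ι K (v j)) ⊗ₜ[K]
        ⁅s a₀ * s (a i) + s (a i) * s a₀, s (a j)⁆ := by
    rw [lie_ι_tmul_grassmannSum, Ring.lie_def, Finset.mul_sum, Finset.sum_mul,
      ← Finset.sum_sub_distrib]
    exact Finset.sum_congr rfl fun i _ => lie_tmul_grassmannSum (commute_ι_mul_ι_s18 u (v i)) _ _ _
  rw [hsum]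
  simp only [ι_mul_ι_mul_ι_tmul_lie hs, Finset.sum_add_distrib, grassmannForm, grassmannPairing,
    grassmannSum, Algebra.TensorProduct.tmul_mul_tmul, Finset.mul_sum, Finset.sum_mul, one_mul,
    TensorProduct.sum_tmul, neg_mul, TensorProduct.neg_tmul, Finset.sum_neg_distrib]
  rfl

lemma commute_grassmannSum_pairing_mul (u : V) (a₀ : α) (v : κ → V) (a : κ → α) :
    Commute (grassmannSum K v (s ∘ a))
      ((grassmannPairing g u a₀ v a ⊗ₜ[K] 1) * grassmannSum K v (s ∘ a)) :=
  (commute_tmul_one_grassmannSum (commute_grassmannPairing u a₀ v a) v (s ∘ a)).symm.mul_right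
    (.refl _)

lemma commute_form_grassmannSum (v : κ → V) (a : κ → α) :
    Commute (grassmannForm g v a ⊗ₜ[K] (1 : B)) (grassmannSum K v (s ∘ a)) :=
  commute_tmul_one_grassmannSum (commute_grassmannForm v a) v (s ∘ a)

end CommRing

variable {K B V α κ : Type*} [Field K] [CharZero K] [Ring B] [Algebra K B] [AddCommGroup V]
  [Module K V] [Fintype κ] {g : α → α → K} {s : α → B} {W W' : Submodule K B}

lemma pairing_mul_pow_mem_baseChange (hW : ∀ p (f : Fin p → α), antisymProd K p (s ∘ f) ∈ W)
    (u : V) (a₀ : α) (v : κ → V) (a : κ → α) (n : ℕ) :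
    (grassmannPairing g u a₀ v a ⊗ₜ[K] 1) * grassmannSum K v (s ∘ a) *
      grassmannSum K v (s ∘ a) ^ n ∈ W.baseChange (ExteriorAlgebra K V) := by
  rw [mul_assoc, ← _root_.pow_succ']
  exact tmul_one_mul_mem_baseChange _
    (grassmannSum_pow_mem_baseChange v (s ∘ a) (n + 1) fun f => hW (n + 1) (a ∘ f))

lemma pow_mul_ι_tmul_add_ι_tmul_mul_pow_mem_baseChange (hs : ParabosonRelations g s)
    (hW : ∀ p (f : Fin p → α), antisymProd K p (s ∘ f) ∈ W) (u : V) (a₀ : α) (v : κ → V)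
    (a : κ → α) (n : ℕ) :
    grassmannSum K v (s ∘ a) ^ n * (ι K u ⊗ₜ[K] s a₀) +
      (ι K u ⊗ₜ[K] s a₀) * grassmannSum K v (s ∘ a) ^ n ∈ W.baseChange (ExteriorAlgebra K V) := by
  have hpolarized := sum_pow_mul_tmul_mul_pow_mem_baseChange (K := K) (W := W)
    (fun i => Option.elim i u v) (s ∘ fun i => Option.elim i a₀ a) fun p f => hW p _
  exact pow_mul_add_mul_pow_mem (W := (W.baseChange (ExteriorAlgebra K V)).restrictScalars K)
    (commute_form_grassmannSum v a) (commute_grassmannSum_pairing_mul u a₀ v a)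
    (fun _ => tmul_one_mul_mem_baseChange _) (lie_lie_ι_tmul_grassmannSum hs u a₀ v a)
    (pairing_mul_pow_mem_baseChange hW u a₀ v a) hpolarized n

lemma ι_tmul_mul_pow_mem_baseChange (hs : ParabosonRelations g s)
    (hW : ∀ p (f : Fin p → α), antisymProd K p (s ∘ f) ∈ W) (hWW' : W ≤ W')
    (hW' : ∀ a b, ∀ w ∈ W, (s a * s b + s b * s a) * w ∈ W') (u : V) (a₀ : α) (v : κ → V)
    (a : κ → α) (n : ℕ) :
    (ι K u ⊗ₜ[K] s a₀) * grassmannSum K v (s ∘ a) ^ n ∈ W'.baseChange (ExteriorAlgebra K V) := by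
  have hD (n : ℕ) : ⁅ι K u ⊗ₜ[K] s a₀, grassmannSum K v (s ∘ a)⁆ * grassmannSum K v (s ∘ a) ^ n ∈
      W'.baseChange (ExteriorAlgebra K V) := by
    rw [lie_ι_tmul_grassmannSum, Finset.sum_mul]
    exact sum_mem fun i _ => tmul_mul_mem_baseChange (hW' _ _) _
      (grassmannSum_pow_mem_baseChange v (s ∘ a) n fun f => hW n (a ∘ f))
  exact mul_pow_mem_of_pow_mul_add_mul_pow_mem
    (W := (W'.baseChange (ExteriorAlgebra K V)).restrictScalars K)
    (commute_form_grassmannSum v a) (commute_grassmannSum_pairing_mul u a₀ v a)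
    (fun _ => tmul_one_mul_mem_baseChange _) (lie_lie_ι_tmul_grassmannSum hs u a₀ v a)
    (pairing_mul_pow_mem_baseChange (fun p f => hWW' (hW p f)) u a₀ v a) hD
    (fun n => Submodule.baseChange_mono _ hWW'
      (pow_mul_ι_tmul_add_ι_tmul_mul_pow_mem_baseChange hs hW u a₀ v a n)) n

theorem mul_antisymProd_add_smul_mem (hs : ParabosonRelations g s)
    (hW : ∀ p (f : Fin p → α), antisymProd K p (s ∘ f) ∈ W) (a₀ : α) {p : ℕ} (a : Fin p → α) :
    s a₀ * antisymProd K p (s ∘ a) + (-1 : K) ^ p • (antisymProd K p (s ∘ a) * s a₀) ∈ W := by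
  let e := Pi.basisFun K (Fin (p + 1))
  refine mem_of_tmul_mem_baseChange (ι_mul_ιMulti_basis_ne_zero e) ?_
  have h := pow_mul_ι_tmul_add_ι_tmul_mul_pow_mem_baseChange hs hW (e 0) a₀ (fun i => e i.succ) a p
  rwa [grassmannSum_pow_eq_tmul_antisymProd, Algebra.TensorProduct.tmul_mul_tmul,
    Algebra.TensorProduct.tmul_mul_tmul, ιMulti_mul_ι, TensorProduct.smul_tmul,
    ← TensorProduct.tmul_add, add_comm (_ • _)] at h

theorem mul_antisymProd_mem (hs : ParabosonRelations g s)
    (hW : ∀ p (f : Fin p → α), antisymProd K p (s ∘ f) ∈ W) (hWW' : W ≤ W')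
    (hW' : ∀ a b, ∀ w ∈ W, (s a * s b + s b * s a) * w ∈ W') (a₀ : α) {p : ℕ} (a : Fin p → α) :
    s a₀ * antisymProd K p (s ∘ a) ∈ W' := by
  let e := Pi.basisFun K (Fin (p + 1))
  refine mem_of_tmul_mem_baseChange (ι_mul_ιMulti_basis_ne_zero e) ?_
  have h := ι_tmul_mul_pow_mem_baseChange hs hW hWW' hW' (e 0) a₀ (fun i => e i.succ) a p
  rwa [grassmannSum_pow_eq_tmul_antisymProd, Algebra.TensorProduct.tmul_mul_tmul] at h

end ParabosonRelations

section LieStable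

variable {K A : Type*} [CommRing K] [Ring A] [Algebra K A] {M N F W : Submodule K A} {t : A}

lemma lie_mem_of_mem_span {S : Set A} (h : ∀ x ∈ S, ⁅t, x⁆ ∈ N) :
    ∀ x ∈ Submodule.span K S, ⁅t, x⁆ ∈ N :=
  (Submodule.span_le (p := N.comap (LinearMap.mulLeft K t - LinearMap.mulRight K t))).2 h

lemma lie_mem_mul (hM : ∀ x ∈ M, ⁅t, x⁆ ∈ M) (hN : ∀ x ∈ N, ⁅t, x⁆ ∈ N) :
    ∀ x ∈ M * N, ⁅t, x⁆ ∈ M * N := by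
  refine (Submodule.mul_le
    (P := (M * N).comap (LinearMap.mulLeft K t - LinearMap.mulRight K t))).2 fun x hx y hy => ?_
  change ⁅t, x * y⁆ ∈ M * N
  rw [lie_mul]
  exact add_mem (Submodule.mul_mem_mul (hM x hx) hy) (Submodule.mul_mem_mul hx (hN y hy))

lemma lie_mem_pow (hM : ∀ x ∈ M, ⁅t, x⁆ ∈ M) (d : ℕ) : ∀ x ∈ M ^ d, ⁅t, x⁆ ∈ M ^ d := by
  induction d with
  | zero =>
    rw [_root_.pow_zero, Submodule.one_eq_span]
    refine lie_mem_of_mem_span ?_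
    rintro _ rfl
    simp [Ring.lie_def]
  | succ d ih =>
    rw [_root_.pow_succ]
    exact lie_mem_mul ih hM

lemma lie_mul_mem_pow_mul (hM : 1 ≤ M) (hF : ∀ f ∈ F, ∀ x ∈ M, ⁅f, x⁆ ∈ F)
    (hFW : F * W ≤ M * W) {d : ℕ} {f x w : A} (hf : f ∈ F) (hx : x ∈ M ^ d) (hw : w ∈ W) :
    ⁅f, x⁆ * w ∈ M ^ d * W := by
  induction d generalizing f x with
  | zero =>
    rw [_root_.pow_zero] at hx
    obtain ⟨k, rfl⟩ := Submodule.mem_one.1 hx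
    simp [Ring.lie_def, Algebra.commutes]
  | succ d ih =>
    rw [_root_.pow_succ'] at hx
    refine Submodule.mul_induction_on hx (fun y hy r hr => ?_) fun y z hy hz => ?_
    · have hmul : ⁅f, y⁆ * (r * w) ∈ M ^ (d + 1) * W := by
        have hsplit : ⁅f, y⁆ * (r * w) = r * (⁅f, y⁆ * w) + 1 * (⁅⁅f, y⁆, r⁆ * w) := by
          rw [Ring.lie_def ⁅f, y⁆]
          noncomm_ring
        have hfy := hF f hf y hy
        rw [hsplit]
        refine add_mem ?_ ?_
        · rw [_root_.pow_succ, mul_assoc]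
          exact Submodule.mul_mem_mul hr (hFW (Submodule.mul_mem_mul hfy hw))
        · rw [_root_.pow_succ', mul_assoc]
          exact Submodule.mul_mem_mul (Submodule.one_le.1 hM) (ih hfy hr)
      rw [lie_mul, add_mul, mul_assoc, mul_assoc]
      refine add_mem hmul ?_
      rw [_root_.pow_succ', mul_assoc]
      exact Submodule.mul_mem_mul hy (ih hf hr)
    · simpa only [Ring.lie_def, mul_add, add_mul, add_sub_add_comm] using add_mem hy hz

end LieStable

section NonstandardFiltration

variable {α : Type*}

/-- The span of `1` and of the anticommutators `s_a s_b + s_b s_a`, i.e. of the bosonic generators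
of degree at most one; its powers form the filtration by bosonic degree. -/
def bosonicSpan (K : Type*) {B : Type*} [CommRing K] [Ring B] [Algebra K B] (s : α → B) :
    Submodule K B :=
  Submodule.span K (insert 1 (Set.range fun q : α × α => s q.1 * s q.2 + s q.2 * s q.1))

/-- The span of the antisymmetrized monomials in the family `s` whose length lies in `P`; taking all
lengths gives `Ω`, restricting `P` to one parity gives its even and odd parts. -/
def antisymSpan (K : Type*) {B : Type*} [CommRing K] [Ring B] [Algebra K B] (s : α → B)
    (P : Set ℕ) : Submodule K B :=
  Submodule.span K {x | ∃ p ∈ P, ∃ a : Fin p → α, x = antisymProd K p (s ∘ a)}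

section CommRing

variable {K B : Type*} [CommRing K] [Ring B] [Algebra K B] {g : α → α → K} {s : α → B}

lemma one_le_bosonicSpan : 1 ≤ bosonicSpan K s :=
  Submodule.one_le.2 <| Submodule.subset_span (Set.mem_insert _ _)

lemma anticommutator_mem_bosonicSpan (a b : α) : s a * s b + s b * s a ∈ bosonicSpan K s :=
  Submodule.subset_span (Set.mem_insert_of_mem _ ⟨(a, b), rfl⟩)

lemma antisymProd_mem_antisymSpan (p : ℕ) (a : Fin p → α) :
    antisymProd K p (s ∘ a) ∈ antisymSpan K s Set.univ :=
  Submodule.subset_span ⟨p, trivial, a, rfl⟩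

lemma antisymSpan_mono {P Q : Set ℕ} (h : P ⊆ Q) : antisymSpan K s P ≤ antisymSpan K s Q :=
  Submodule.span_mono fun _ ⟨p, hp, hx⟩ => ⟨p, h hp, hx⟩

lemma lie_mem_of_mem_bosonicSpan {t : B} {N : Submodule K B}
    (h : ∀ a b, ⁅t, s a * s b + s b * s a⁆ ∈ N) : ∀ x ∈ bosonicSpan K s, ⁅t, x⁆ ∈ N := by
  refine lie_mem_of_mem_span ?_
  rintro _ (rfl | ⟨q, rfl⟩)
  · simp [Ring.lie_def]
  · exact h q.1 q.2

namespace ParabosonRelations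

lemma lie_mem_bosonicSpan (hs : ParabosonRelations g s) (b c : α) :
    ∀ x ∈ bosonicSpan K s, ⁅s b * s c + s c * s b, x⁆ ∈ bosonicSpan K s := by
  refine lie_mem_of_mem_bosonicSpan fun e f => ?_
  have hmem (r : K) (a b : α) : r • (s a * s b + s b * s a) ∈ bosonicSpan K s :=
    Submodule.smul_mem _ r (anticommutator_mem_bosonicSpan a b)
  rw [hs.lie_anticommutator]
  exact sub_mem (sub_mem (sub_mem (neg_mem (hmem _ _ _)) (hmem _ _ _)) (hmem _ _ _)) (hmem _ _ _)

lemma lie_mem_antisymSpan (hs : ParabosonRelations g s) (b c : α) (P : Set ℕ) :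
    ∀ w ∈ antisymSpan K s P, ⁅s b * s c + s c * s b, w⁆ ∈ antisymSpan K s P := by
  refine lie_mem_of_mem_span ?_
  rintro _ ⟨p, hp, a, rfl⟩
  rw [lie_antisymProd]
  refine sum_mem fun j _ => ?_
  have hupdate (e : α) : antisymProd K p (Function.update (s ∘ a) j (s e)) ∈ antisymSpan K s P := by
    rw [← Function.comp_update]
    exact Submodule.subset_span ⟨p, hp, _, rfl⟩
  rw [Function.comp_apply, hs, AlternatingMap.map_update_sub, AlternatingMap.map_update_neg,
    AlternatingMap.map_update_smul, AlternatingMap.map_update_smul]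
  exact sub_mem (neg_mem (Submodule.smul_mem _ _ (hupdate c))) (Submodule.smul_mem _ _ (hupdate b))

lemma lie_mem_bosonicSpan_pow_mul_antisymSpan (hs : ParabosonRelations g s) (b c : α) (d : ℕ)
    (P : Set ℕ) : ∀ x ∈ bosonicSpan K s ^ d * antisymSpan K s P,
      ⁅s b * s c + s c * s b, x⁆ ∈ bosonicSpan K s ^ d * antisymSpan K s P :=
  lie_mem_mul (lie_mem_pow (hs.lie_mem_bosonicSpan b c) d) (hs.lie_mem_antisymSpan b c P)

lemma lie_mem_span_range (hs : ParabosonRelations g s) :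
    ∀ f ∈ Submodule.span K (Set.range s), ∀ x ∈ bosonicSpan K s,
      ⁅f, x⁆ ∈ Submodule.span K (Set.range s) := by
  have hmem (r : K) (a : α) : r • s a ∈ Submodule.span K (Set.range s) :=
    Submodule.smul_mem _ r (Submodule.subset_span ⟨a, rfl⟩)
  intro f hf
  refine lie_mem_of_mem_bosonicSpan fun a b => ?_
  rw [Ring.lie_def, ← neg_sub, neg_mem_iff]
  refine lie_mem_of_mem_span ?_ f hf
  rintro _ ⟨c, rfl⟩
  rw [hs]
  exact sub_mem (neg_mem (hmem _ _)) (hmem _ _)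

end ParabosonRelations

end CommRing

variable {K B : Type*} [Field K] [CharZero K] [Ring B] [Algebra K B] {g : α → α → K} {s : α → B}

namespace ParabosonRelations

lemma span_range_mul_antisymSpan_le (hs : ParabosonRelations g s) :
    Submodule.span K (Set.range s) * antisymSpan K s Set.univ ≤
      bosonicSpan K s * antisymSpan K s Set.univ := by
  nth_rw 1 [antisymSpan]
  rw [Submodule.span_mul_span]
  refine Submodule.span_le.2 ?_
  rintro _ ⟨_, ⟨c, rfl⟩, _, ⟨p, -, a, rfl⟩, rfl⟩
  exact mul_antisymProd_mem hs antisymProd_mem_antisymSpan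
    (fun w hw => one_mul w ▸ Submodule.mul_mem_mul (Submodule.one_le.1 one_le_bosonicSpan) hw)
    (fun a b _ hw => Submodule.mul_mem_mul (anticommutator_mem_bosonicSpan a b) hw) c a

lemma mul_add_smul_mul_mem_antisymSpan (hs : ParabosonRelations g s) (c : α) {P : Set ℕ} {ε : K}
    (hP : ∀ p ∈ P, (-1) ^ p = ε) {w : B} (hw : w ∈ antisymSpan K s P) :
    s c * w + ε • (w * s c) ∈ antisymSpan K s Set.univ := by
  suffices h : antisymSpan K s P ≤ (antisymSpan K s Set.univ).comap
      (LinearMap.mulLeft K (s c) + ε • LinearMap.mulRight K (s c)) from h hw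
  refine Submodule.span_le.2 ?_
  rintro _ ⟨p, hp, a, rfl⟩
  have h := mul_antisymProd_add_smul_mem hs antisymProd_mem_antisymSpan c a
  rwa [hP p hp] at h

theorem mul_add_smul_mul_mem (hs : ParabosonRelations g s) (c : α) (d : ℕ) {P : Set ℕ} {ε : K}
    (hP : ∀ p ∈ P, (-1) ^ p = ε) : ∀ x ∈ bosonicSpan K s ^ d * antisymSpan K s P,
      s c * x + ε • (x * s c) ∈ bosonicSpan K s ^ d * antisymSpan K s Set.univ := by
  refine (Submodule.mul_le (P := (bosonicSpan K s ^ d * antisymSpan K s Set.univ).comap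
    (LinearMap.mulLeft K (s c) + ε • LinearMap.mulRight K (s c)))).2 fun b hb w hw => ?_
  have hleibniz : s c * (b * w) + ε • (b * w * s c) =
      ⁅s c, b⁆ * w + b * (s c * w + ε • (w * s c)) := by
    rw [Ring.lie_def, sub_mul, mul_add, mul_smul_comm]
    simp only [mul_assoc]
    abel
  change s c * (b * w) + ε • (b * w * s c) ∈ bosonicSpan K s ^ d * antisymSpan K s Set.univ
  rw [hleibniz]
  exact add_mem
    (lie_mul_mem_pow_mul one_le_bosonicSpan hs.lie_mem_span_range hs.span_range_mul_antisymSpan_le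
      (Submodule.subset_span ⟨c, rfl⟩) hb (antisymSpan_mono P.subset_univ hw))
    (Submodule.mul_mem_mul hb (hs.mul_add_smul_mul_mem_antisymSpan c hP hw))

end ParabosonRelations

theorem stmt18_general (hs : ParabosonRelations g s) (d : ℕ) :
    (∀ b c, ∀ x ∈ bosonicSpan K s ^ d * antisymSpan K s Set.univ,
      (s b * s c + s c * s b) * x - x * (s b * s c + s c * s b) ∈
        bosonicSpan K s ^ d * antisymSpan K s Set.univ) ∧
    (∀ a,
      (∀ x ∈ bosonicSpan K s ^ d * antisymSpan K s {p | p % 2 = 0},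
        s a * x + x * s a ∈ bosonicSpan K s ^ d * antisymSpan K s Set.univ) ∧
      (∀ x ∈ bosonicSpan K s ^ d * antisymSpan K s {p | p % 2 = 1},
        s a * x - x * s a ∈ bosonicSpan K s ^ d * antisymSpan K s Set.univ)) := by
  refine ⟨fun b c => hs.lie_mem_bosonicSpan_pow_mul_antisymSpan b c d Set.univ,
    fun a => ⟨fun x hx => ?_, fun x hx => ?_⟩⟩
  · simpa only [one_smul] using
      hs.mul_add_smul_mul_mem a d (fun p hp => (Nat.even_iff.2 hp).neg_one_pow) x hx
  · simpa only [neg_smul, one_smul, ← sub_eq_add_neg] using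
      hs.mul_add_smul_mul_mem a d (fun p hp => (Nat.odd_iff.2 hp).neg_one_pow) x hx

end NonstandardFiltration

section Orthosymplectic

variable {n d : ℕ}

lemma parabosonRelations_σ : ParabosonRelations (gmat n) (σ n) := by
  intro a b c
  have h := RingQuot.mkAlgHom_rel ℚ (OspRel.rel a b c)
  simp only [map_mul, map_add, map_sub, AlgHom.commutes] at h
  rw [Ring.lie_def, σ, σ, σ, h, Algebra.smul_def, Algebra.smul_def]
  abel

lemma brkt_eq_antisymProd {p : ℕ} (a : Fin p → Fin (2 * n)) :
    brkt n p a = antisymProd ℚ p (σ n ∘ a) := by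
  rw [antisymProd_apply]
  rfl

lemma Omega_eq_antisymSpan : Omega n = antisymSpan ℚ (σ n) Set.univ := by
  simp only [Omega, antisymSpan, brkt_eq_antisymProd, Set.mem_univ, true_and]

lemma bosonicSpan_mul_Bfil_le : bosonicSpan ℚ (σ n) * Bfil n d ≤ Bfil n (d + 1) := by
  rw [bosonicSpan, Bfil, Submodule.span_mul_span]
  refine Submodule.span_le.2 ?_
  rintro _ ⟨_, rfl | ⟨q, rfl⟩, _, ⟨l, hl, rfl⟩, rfl⟩
  · exact Submodule.subset_span ⟨l, hl.trans d.le_succ, one_mul _⟩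
  · exact Submodule.subset_span ⟨q :: l, Nat.succ_le_succ hl, List.prod_cons.symm⟩

lemma Bfil_eq_bosonicSpan_pow : Bfil n d = bosonicSpan ℚ (σ n) ^ d := by
  apply le_antisymm
  · refine Submodule.span_le.2 ?_
    rintro _ ⟨l, hl, rfl⟩
    refine pow_le_pow_right₀ one_le_bosonicSpan hl ?_
    clear hl
    induction l with
    | nil => exact Submodule.one_le.1 le_rfl
    | cons q l ih =>
      rw [List.map_cons, List.prod_cons, List.length_cons, _root_.pow_succ']
      exact Submodule.mul_mem_mul (anticommutator_mem_bosonicSpan q.1 q.2) ih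
  · induction d with
    | zero => exact Submodule.one_le.2 <| Submodule.subset_span ⟨[], le_rfl, rfl⟩
    | succ d ih =>
      rw [_root_.pow_succ']
      exact (mul_le_mul_right ih _).trans bosonicSpan_mul_Bfil_le

lemma Vfil_eq_mul : Vfil n d = bosonicSpan ℚ (σ n) ^ d * antisymSpan ℚ (σ n) Set.univ := by
  rw [← Bfil_eq_bosonicSpan_pow, ← Omega_eq_antisymSpan]
  apply le_antisymm
  · refine Submodule.span_le.2 ?_
    rintro _ ⟨b, hb, w, hw, rfl⟩
    exact Submodule.mul_mem_mul hb hw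
  · exact Submodule.mul_le.2 fun b hb w hw => Submodule.subset_span ⟨b, hb, w, hw, rfl⟩

lemma VfilPar_le_mul (r : ℕ) :
    VfilPar n d r ≤ bosonicSpan ℚ (σ n) ^ d * antisymSpan ℚ (σ n) {p | p % 2 = r} := by
  rw [← Bfil_eq_bosonicSpan_pow]
  refine Submodule.span_le.2 ?_
  rintro _ ⟨b, hb, p, hp, a, rfl⟩
  exact Submodule.mul_mem_mul hb (Submodule.subset_span ⟨p, hp, a, brkt_eq_antisymProd a⟩)

end Orthosymplectic

/-- Each `V_d = B_d·Ω` is stable under the nonstandard action: (i) it is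
stable under the adjoint action of every bosonic generator `σ_{bc}`; (ii) for every fermionic
generator `σₐ`, elements of `V_d` of even (resp. odd) fermionic parity are sent into `V_d` by
the anticommutator (resp. the commutator) with `σₐ`.  Hence `U(osp(1|2n))` splits into finite
dimensional modules under the nonstandard action. -/
theorem stmt18 (n : ℕ) (hn : 1 ≤ n) (d : ℕ) :
    (∀ (b c : Fin (2*n)), ∀ x ∈ Vfil n d, σσ n b c * x - x * σσ n b c ∈ Vfil n d) ∧
    (∀ a : Fin (2*n),
      (∀ x ∈ VfilPar n d 0, σ n a * x + x * σ n a ∈ Vfil n d) ∧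
      (∀ x ∈ VfilPar n d 1, σ n a * x - x * σ n a ∈ Vfil n d)) := by
  obtain ⟨hbosonic, hfermionic⟩ := stmt18_general (parabosonRelations_σ (n := n)) d
  rw [Vfil_eq_mul]
  exact ⟨hbosonic, fun a => ⟨fun x hx => (hfermionic a).1 x (VfilPar_le_mul 0 hx),
    fun x hx => (hfermionic a).2 x (VfilPar_le_mul 1 hx)⟩⟩

end
end
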